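/- arXiv:0705.2253 — 4 statements merged into one kernel-verified Lean document; each statement's English description precedes it below -/
import Mathlib

section
/- For every integer n ≥ 2, the unitary random walk kernel L on U(n) is √(1 − 1/C(n,2))-contracting in the L² Wasserstein metric for the intrinsic metric D: for all probability measures μ, ν on U(n), W_{D,2}(μL, νL) ≤ √(1 − 1/C(n,2)) · W_{D,2}(μ, ν). -/
open MeasureTheory ENNReal Filter Topology Matrix

noncomputable section

/-- The (Borel) product measurable structure on matrices. -/
instance matrixMeasurableSpace {m n R : Type*} [MeasurableSpace R] :
    MeasurableSpace (Matrix m n R) :=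
  (inferInstance : MeasurableSpace (m → n → R))

/-- `η` is a coupling of `μ` and `ν`: its two marginals are `μ` and `ν`. -/
def IsCoupling {X : Type*} [MeasurableSpace X] (η : Measure (X × X)) (μ ν : Measure X) : Prop :=
  η.map Prod.fst = μ ∧ η.map Prod.snd = ν

/-- The `L^p` transportation cost (Wasserstein) distance associated with the distance
function `d`, with values in `ℝ≥0∞`:
`W_{d,p}(μ,ν) = inf { (∫ d(x,y)^p dη)^{1/p} : η a coupling of (μ,ν) }`. -/
def wassersteinE {X : Type*} [MeasurableSpace X] (d : X → X → ℝ≥0∞) (p : ℝ)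
    (μ ν : Measure X) : ℝ≥0∞ :=
  ⨅ (η : Measure (X × X)) (_ : IsCoupling η μ ν), (∫⁻ z, d z.1 z.2 ^ p ∂η) ^ (1 / p)

/-- The length of the curve `γ` over `[0,1]`, w.r.t. the distance function `d`:
the supremum, over all partitions `0 = t 0 ≤ t 1 ≤ ⋯ ≤ t k = 1` of `[0,1]`, of the sums of
the distances between consecutive points of the curve. -/
def pathLengthE {X : Type*} (d : X → X → ℝ≥0∞) (γ : ℝ → X) : ℝ≥0∞ :=
  ⨆ (k : ℕ) (t : Fin (k + 1) → ℝ) (_ : Monotone t) (_ : t 0 = 0) (_ : t (Fin.last k) = 1),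
    ∑ i : Fin k, d (γ (t i.castSucc)) (γ (t i.succ))

/-- The intrinsic (length) distance on the set `S` induced by the distance function `d`:
the infimum of `d`-lengths of continuous paths joining `a` to `b` inside `S`. -/
def intrinsicDistE {X : Type*} [TopologicalSpace X] (d : X → X → ℝ≥0∞) (S : Set X)
    (a b : X) : ℝ≥0∞ :=
  ⨅ (γ : ℝ → X) (_ : ContinuousOn γ (Set.Icc 0 1)) (_ : Set.MapsTo γ (Set.Icc 0 1) S)
    (_ : γ 0 = a) (_ : γ 1 = b), pathLengthE d γ

/-- `t` iterated steps of the Markov transition kernel `P`, started from the initial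
distribution `μ` (so `kernelIterate P t μ = μP^t`). -/
def kernelIterate {X : Type*} [MeasurableSpace X] (P : X → Measure X) :
    ℕ → Measure X → Measure X
  | 0, μ => μ
  | t + 1, μ => (kernelIterate P t μ).bind P

/-- A Haar probability measure for the multiplicative set `S`, viewed as a measure on the
ambient space: a probability measure carried by `S` that is invariant under left and right
translations by all elements of `S`. -/
def IsHaarLike {X : Type*} [MeasurableSpace X] [Mul X] (S : Set X) (μ : Measure X) : Prop :=
  IsProbabilityMeasure μ ∧ μ Sᶜ = 0 ∧
    ∀ a ∈ S, μ.map (fun x => a * x) = μ ∧ μ.map (fun x => x * a) = μ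

/-- The Haar probability measure of a compact matrix group `S` (such as `SO(n)` or `U(n)`),
viewed as a measure on the ambient matrix space.  For such `S` a translation-invariant
probability measure exists and is unique, so `haarLike S` is *the* Haar probability
measure of `S`. -/
def haarLike {X : Type*} [MeasurableSpace X] [Mul X] (S : Set X) : Measure X := by
  classical exact if h : ∃ μ, IsHaarLike S μ then h.choose else 0

/-- The set of pairs `1 ≤ i < j ≤ n` of indices. -/
def pairs (n : ℕ) : Finset (Fin n × Fin n) :=
  Finset.univ.filter fun p => p.1 < p.2

/-- The unitary group `U(n)`, as a subset of the `n × n` complex matrices. -/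
def UU (n : ℕ) : Set (Matrix (Fin n) (Fin n) ℂ) := {a | a * aᴴ = 1}

/-- The Hilbert–Schmidt distance `‖a - b‖_hs = √(Tr((a-b)*(a-b)))` between complex
matrices, as an `ℝ≥0∞`-valued distance function. -/
def hsDistC {n : ℕ} (a b : Matrix (Fin n) (Fin n) ℂ) : ℝ≥0∞ :=
  ENNReal.ofReal (Real.sqrt (Matrix.trace ((a - b)ᴴ * (a - b))).re)

/-- The intrinsic (length) metric `D` on `U(n)` induced by the Hilbert–Schmidt norm:
the infimum of `hs`-lengths of continuous paths inside `U(n)`. -/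
def DU (n : ℕ) (a b : Matrix (Fin n) (Fin n) ℂ) : ℝ≥0∞ :=
  intrinsicDistE hsDistC (UU n) a b

/-- The unitary matrix `u_{ij} ∈ U(n)` acting as `u ∈ U(2)` on `span{e_i, e_j}` (identifying
`e_i, e_j` with the standard basis of `ℂ²`) and as the identity on the orthogonal
complement. -/
def embed2 {n : ℕ} (i j : Fin n) (u : Matrix (Fin 2) (Fin 2) ℂ) :
    Matrix (Fin n) (Fin n) ℂ :=
  Matrix.of fun k l =>
    if k = i ∧ l = i then u 0 0
    else if k = i ∧ l = j then u 0 1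
    else if k = j ∧ l = i then u 1 0
    else if k = j ∧ l = j then u 1 1
    else if k = l then 1 else 0

/-- The transition kernel of the random walk on `U(n)`:
`L_x = (1/C(n,2)) ∑_{1≤i<j≤n} ∫_{U(2)} δ_{R_{ij}·x} dH₂(R)`, where `H₂` is the Haar
probability measure on `U(2)`. -/
def unitKernel (n : ℕ) (x : Matrix (Fin n) (Fin n) ℂ) : Measure (Matrix (Fin n) (Fin n) ℂ) :=
  (n.choose 2 : ℝ≥0∞)⁻¹ •
    ∑ p ∈ pairs n, (haarLike (UU 2)).map fun u => embed2 p.1 p.2 u * x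

open scoped NNReal

section PathLength

variable {E : Type*} [PseudoEMetricSpace E]

lemma pathLengthE_edist (γ : ℝ → E) :
    pathLengthE edist γ = eVariationOn γ (Set.Icc 0 1) := by
  apply le_antisymm
  · refine iSup_le fun k => iSup_le fun t => iSup_le fun ht => iSup_le fun h0 => iSup_le fun h1 => ?_
    let u : ℕ → ℝ := fun i => t ⟨min i k, by omega⟩
    have hu : Monotone u := fun i j hij => ht (by simp only [Fin.mk_le_mk]; omega)
    have hu1 : ∀ i, u i ∈ Set.Icc (0 : ℝ) 1 := fun i =>
      ⟨h0 ▸ ht (Fin.zero_le _), h1 ▸ ht (Fin.le_last _)⟩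
    refine le_trans (le_of_eq ?_) (eVariationOn.sum_le (n := k) (f := γ) hu hu1)
    rw [Finset.sum_range]
    refine Finset.sum_congr rfl fun i _ => ?_
    rw [edist_comm]
    congr 3 <;> ext <;> simp only [Fin.val_succ, Fin.val_castSucc] <;> omega
  · refine iSup_le fun ⟨m, u, hu, hu1⟩ => ?_
    let v : ℕ → ℝ := fun i => if i = 0 then 0 else if i ≤ m + 1 then u (i - 1) else 1
    have hv : Monotone v := by
      intro i j hij
      by_cases hi : i = 0
      · by_cases hj : j = 0
        · simp [v, hi, hj]
        · by_cases hj' : j ≤ m + 1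
          · simpa [v, hi, hj, hj'] using (hu1 _).1
          · simp [v, hi, hj, hj']
      · have hj : j ≠ 0 := by omega
        by_cases hj' : j ≤ m + 1
        · have hi' : i ≤ m + 1 := by omega
          simpa [v, hi, hi', hj, hj'] using hu (by omega)
        · by_cases hi' : i ≤ m + 1
          · simpa [v, hi, hi', hj, hj'] using (hu1 _).2
          · simp [v, hi, hi', hj, hj']
    refine le_trans ?_ (le_iSup_of_le (m + 2) <| le_iSup_of_le (fun i : Fin (m + 3) => v i) <|
      le_iSup_of_le (fun i j hij => hv hij) <| le_iSup_of_le (by simp [v]) <|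
      le_iSup_of_le (by simp [v]) le_rfl)
    simp only [Fin.val_succ, Fin.val_castSucc]
    rw [← Finset.sum_range (f := fun i => edist (γ (v i)) (γ (v (i + 1)))),
      Finset.sum_range_succ, Finset.sum_range_succ']
    refine le_trans (Finset.sum_le_sum fun i hi => ?_) (le_trans le_self_add le_self_add)
    have : i < m := Finset.mem_range.1 hi
    rw [edist_comm]
    simp [v, this, this.le]

lemma intrinsicDistE_le_of_lipschitz {S : Set E} {γ : ℝ → E} {K : ℝ≥0}
    (hγ : LipschitzOnWith K γ (Set.Icc 0 1)) (hS : Set.MapsTo γ (Set.Icc 0 1) S) :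
    intrinsicDistE edist S (γ 0) (γ 1) ≤ K := by
  refine iInf_le_of_le γ <| iInf_le_of_le hγ.continuousOn <| iInf_le_of_le hS <|
    iInf_le_of_le rfl <| iInf_le_of_le rfl ?_
  rw [pathLengthE_edist]
  have h := hγ.comp_eVariationOn_le (g := id) (s := Set.Icc (0 : ℝ) 1) (Set.mapsTo_id _)
  have h1 := (monotone_id.monotoneOn (Set.Icc (0 : ℝ) 1)).eVariationOn_eq
    (a := 0) (b := 1) (by simp) (by simp)
  simp only [Set.inter_self, id, sub_zero, ENNReal.ofReal_one] at h1
  exact h.trans (mul_le_of_le_one_right' h1.le)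

lemma intrinsicDistE_triangle (S : Set E) (a b c : E) :
    intrinsicDistE edist S a c ≤ intrinsicDistE edist S a b + intrinsicDistE edist S b c := by
  unfold intrinsicDistE
  simp only [ENNReal.iInf_add, ENNReal.add_iInf]
  refine le_iInf fun γ₂ => le_iInf fun h₂ => le_iInf fun m₂ => le_iInf fun a₂ => le_iInf fun b₂ =>
    le_iInf fun γ₁ => le_iInf fun h₁ => le_iInf fun m₁ => le_iInf fun a₁ => le_iInf fun b₁ => ?_
  let γ : ℝ → E := fun t => if t ≤ 1 / 2 then γ₁ (2 * t) else γ₂ (2 * t - 1)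
  have hU : Set.Icc (0 : ℝ) 1 = Set.Icc 0 (1 / 2) ∪ Set.Icc (1 / 2) 1 :=
    (Set.Icc_union_Icc_eq_Icc (by norm_num) (by norm_num)).symm
  have e₁ : Set.EqOn γ (γ₁ ∘ fun t => 2 * t) (Set.Icc 0 (1 / 2)) := fun t ht => if_pos ht.2
  have e₂ : Set.EqOn γ (γ₂ ∘ fun t => 2 * t - 1) (Set.Icc (1 / 2) 1) := by
    intro t ht
    by_cases h : t ≤ 1 / 2
    · have : t = 1 / 2 := le_antisymm h ht.1
      subst this
      simp [γ, b₁, a₂]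
    · exact if_neg h
  have i₁ : Set.MapsTo (fun t : ℝ => 2 * t) (Set.Icc 0 (1 / 2)) (Set.Icc 0 1) := by
    intro t ht; constructor <;> linarith [ht.1, ht.2]
  have i₂ : Set.MapsTo (fun t : ℝ => 2 * t - 1) (Set.Icc (1 / 2) 1) (Set.Icc 0 1) := by
    intro t ht; constructor <;> linarith [ht.1, ht.2]
  refine iInf_le_of_le γ <| iInf_le_of_le ?_ <| iInf_le_of_le ?_ <|
    iInf_le_of_le (by simp [γ, a₁]) <| iInf_le_of_le (by norm_num [γ, b₂]) ?_
  · rw [hU]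
    refine ContinuousOn.union_of_isClosed ?_ ?_ isClosed_Icc isClosed_Icc
    · exact (h₁.comp (by fun_prop) i₁).congr e₁
    · exact (h₂.comp (by fun_prop) i₂).congr e₂
  · rw [hU]
    rintro t (ht | ht)
    · rw [e₁ ht]; exact m₁ (i₁ ht)
    · rw [e₂ ht]; exact m₂ (i₂ ht)
  · simp only [pathLengthE_edist]
    have h := eVariationOn.Icc_add_Icc γ (s := Set.univ) (a := 0) (b := 1 / 2) (c := 1)
      (by norm_num) (by norm_num) trivial
    simp only [Set.univ_inter] at h
    rw [← h, eVariationOn.congr e₁, eVariationOn.congr e₂]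
    refine add_le_add (eVariationOn.comp_le_of_monotoneOn _ _ ?_ i₁)
      (eVariationOn.comp_le_of_monotoneOn _ _ ?_ i₂)
    · intro x _ y _ h; simpa using h
    · intro x _ y _ h; simpa using h

end PathLength

open scoped Matrix.Norms.Frobenius

section Frobenius

variable {n : ℕ}

lemma frobenius_norm_eq_sqrt_trace (a : Matrix (Fin n) (Fin n) ℂ) :
    ‖a‖ = Real.sqrt (trace (aᴴ * a)).re := by
  rw [frobenius_norm_def, Real.sqrt_eq_rpow, Finset.sum_comm]
  congr 1
  simp only [trace, diag_apply, mul_apply, conjTranspose_apply, Complex.re_sum]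
  refine Finset.sum_congr rfl fun i _ => Finset.sum_congr rfl fun j _ => ?_
  rw [Real.rpow_two, ← Complex.normSq_eq_norm_sq, Complex.star_def, ← Complex.normSq_eq_conj_mul_self,
    Complex.ofReal_re]

lemma hsDistC_eq_edist :
    (hsDistC : Matrix (Fin n) (Fin n) ℂ → Matrix (Fin n) (Fin n) ℂ → ℝ≥0∞) = edist := by
  funext a b
  rw [hsDistC, ← frobenius_norm_eq_sqrt_trace, edist_dist, dist_eq_norm]

lemma DU_eq (a b : Matrix (Fin n) (Fin n) ℂ) : DU n a b = intrinsicDistE edist (UU n) a b := by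
  rw [DU, hsDistC_eq_edist]

lemma UU.conjTranspose_mul {u : Matrix (Fin n) (Fin n) ℂ} (hu : u ∈ UU n) : uᴴ * u = 1 :=
  mul_eq_one_comm.1 hu

lemma UU.one_mem : (1 : Matrix (Fin n) (Fin n) ℂ) ∈ UU n := by simp [UU]

lemma UU.conjTranspose_mem {u : Matrix (Fin n) (Fin n) ℂ} (hu : u ∈ UU n) : uᴴ ∈ UU n := by
  simpa [UU] using UU.conjTranspose_mul hu

lemma UU.mul_mem {u v : Matrix (Fin n) (Fin n) ℂ} (hu : u ∈ UU n) (hv : v ∈ UU n) :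
    u * v ∈ UU n := by
  change u * v * (u * v)ᴴ = 1
  have hv' : v * vᴴ = 1 := hv
  rw [Matrix.conjTranspose_mul, Matrix.mul_assoc, ← Matrix.mul_assoc v, hv', Matrix.one_mul]
  exact hu

lemma isClosed_UU : IsClosed (UU n) :=
  isClosed_eq (by fun_prop) continuous_const

lemma norm_UU_mul {u : Matrix (Fin n) (Fin n) ℂ} (hu : u ∈ UU n) (a : Matrix (Fin n) (Fin n) ℂ) :
    ‖u * a‖ = ‖a‖ := by
  rw [frobenius_norm_eq_sqrt_trace, frobenius_norm_eq_sqrt_trace, conjTranspose_mul,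
    Matrix.mul_assoc, ← Matrix.mul_assoc uᴴ, UU.conjTranspose_mul hu, Matrix.one_mul]

lemma norm_mul_UU {u : Matrix (Fin n) (Fin n) ℂ} (hu : u ∈ UU n) (a : Matrix (Fin n) (Fin n) ℂ) :
    ‖a * u‖ = ‖a‖ := by
  rw [← frobenius_norm_conjTranspose, conjTranspose_mul, norm_UU_mul (UU.conjTranspose_mem hu),
    frobenius_norm_conjTranspose]

lemma exp_mem_UU {h : Matrix (Fin n) (Fin n) ℂ} (hh : hᴴ = -h) : NormedSpace.exp h ∈ UU n := by
  change NormedSpace.exp h * (NormedSpace.exp h)ᴴ = 1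
  rw [← Matrix.exp_conjTranspose, hh, ← Matrix.exp_add_of_commute _ _ ((Commute.refl h).neg_right)]
  simp

/-- Near the identity, a unitary matrix has a skew-Hermitian logarithm of almost the same norm
as its distance to the identity. -/
lemma exists_skew_log (ε : ℝ) (hε : 0 < ε) : ∃ δ > 0, ∀ u ∈ UU n, ‖u - 1‖ < δ →
    ∃ h : Matrix (Fin n) (Fin n) ℂ, hᴴ = -h ∧ NormedSpace.exp h = u ∧
      ‖h‖ ≤ (1 + ε) * ‖u - 1‖ := by
  have hs : HasStrictFDerivAt (NormedSpace.exp : Matrix (Fin n) (Fin n) ℂ → _)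
      ((ContinuousLinearEquiv.refl ℝ (Matrix (Fin n) (Fin n) ℂ) :
        Matrix (Fin n) (Fin n) ℂ →L[ℝ] Matrix (Fin n) (Fin n) ℂ)) 0 :=
    hasStrictFDerivAt_exp_zero
  set c : ℝ := ε / (1 + ε) with hc
  have hc0 : 0 < c := by positivity
  have hc1 : c < 1 := by rw [hc, div_lt_one (by positivity)]; linarith
  obtain ⟨r, hr, hball⟩ := Metric.eventually_nhds_iff.1 (hs.isLittleO.def hc0)
  have hloc : ∀ a b : Matrix (Fin n) (Fin n) ℂ, ‖a‖ < r → ‖b‖ < r →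
      ‖NormedSpace.exp a - NormedSpace.exp b - (a - b)‖ ≤ c * ‖a - b‖ := by
    intro a b ha hb
    exact @hball (a, b) (by simpa [Prod.dist_eq] using ⟨ha, hb⟩)
  have hmap : ∀ᶠ u in 𝓝 (1 : Matrix (Fin n) (Fin n) ℂ), ∃ h, ‖h‖ < r ∧ NormedSpace.exp h = u := by
    have h1 : Filter.map NormedSpace.exp (𝓝 (0 : Matrix (Fin n) (Fin n) ℂ)) = 𝓝 1 := by
      have := hs.map_nhds_eq_of_equiv
      rwa [NormedSpace.exp_zero] at this
    have h2 : ∀ᶠ u in Filter.map NormedSpace.exp (𝓝 (0 : Matrix (Fin n) (Fin n) ℂ)),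
        ∃ h, ‖h‖ < r ∧ NormedSpace.exp h = u := by
      rw [eventually_map]
      filter_upwards [Metric.ball_mem_nhds (0 : Matrix (Fin n) (Fin n) ℂ) hr] with x hx
      exact ⟨x, by simpa using hx, rfl⟩
    rw [h1] at h2
    exact h2
  obtain ⟨δ, hδ, hd⟩ := Metric.eventually_nhds_iff.1 hmap
  refine ⟨δ, hδ, fun u hu hu1 => ?_⟩
  obtain ⟨h, hr', rfl⟩ := hd (by rwa [dist_eq_norm])
  refine ⟨h, ?_, rfl, ?_⟩
  · have e : NormedSpace.exp hᴴ = NormedSpace.exp (-h) := by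
      have e1 : NormedSpace.exp (-h) * NormedSpace.exp h = 1 := by
        rw [← Matrix.exp_add_of_commute _ _ ((Commute.refl h).neg_left)]; simp
      have e2 : NormedSpace.exp h * NormedSpace.exp hᴴ = 1 := by
        rw [Matrix.exp_conjTranspose]; exact hu
      exact (left_inv_eq_right_inv e1 e2).symm
    have := hloc hᴴ (-h) (by rwa [frobenius_norm_conjTranspose]) (by rwa [norm_neg])
    rw [e, sub_self, zero_sub, norm_neg] at this
    have h0 : ‖hᴴ - -h‖ = 0 := by nlinarith [norm_nonneg (hᴴ - -h)]
    exact sub_eq_zero.1 (norm_eq_zero.1 h0)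
  · have := hloc h 0 hr' (by simpa using hr)
    rw [NormedSpace.exp_zero, sub_zero] at this
    have h2 : ‖h‖ ≤ ‖NormedSpace.exp h - 1‖ + ‖NormedSpace.exp h - 1 - h‖ := by
      simpa using norm_sub_le (NormedSpace.exp h - 1) (NormedSpace.exp h - 1 - h)
    have h3 : (1 - c) * ‖h‖ ≤ ‖NormedSpace.exp h - 1‖ := by linarith
    have h4 : (1 + ε) * (1 - c) = 1 := by rw [hc]; field_simp; ring
    calc ‖h‖ = (1 + ε) * ((1 - c) * ‖h‖) := by rw [← mul_assoc, h4, one_mul]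
      _ ≤ _ := by gcongr

end Frobenius

section Distance

variable {n : ℕ}

lemma DU_triangle (a b c : Matrix (Fin n) (Fin n) ℂ) : DU n a c ≤ DU n a b + DU n b c := by
  simp only [DU_eq]
  exact intrinsicDistE_triangle _ _ _ _

lemma DU_mul_left_le {u : Matrix (Fin n) (Fin n) ℂ} (hu : u ∈ UU n)
    (a b : Matrix (Fin n) (Fin n) ℂ) : DU n (u * a) (u * b) ≤ DU n a b := by
  simp only [DU_eq]
  refine le_iInf fun γ => le_iInf fun hγ => le_iInf fun m => le_iInf fun h0 => le_iInf fun h1 => ?_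
  refine iInf_le_of_le (fun t => u * γ t) <| iInf_le_of_le (continuousOn_const.mul hγ) <|
    iInf_le_of_le (fun t ht => UU.mul_mem hu (m ht)) <|
    iInf_le_of_le (by simp only [h0]) <| iInf_le_of_le (by simp only [h1]) ?_
  have : ∀ x y, edist (u * x) (u * y) = edist x y := fun x y => by
    rw [edist_dist, edist_dist, dist_eq_norm, dist_eq_norm, ← Matrix.mul_sub, norm_UU_mul hu]
  simp only [pathLengthE, this, le_refl]

end Distance

section Embedding

variable {n : ℕ}

/-- The isometry `ℂ² → ℂⁿ` sending the standard basis to `e_i, e_j`. -/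
def inclusion2 (i j : Fin n) : Matrix (Fin n) (Fin 2) ℂ :=
  (1 : Matrix (Fin n) (Fin n) ℂ).submatrix id ![i, j]

lemma inclusion2_conjTranspose_mul {i j : Fin n} (hij : i ≠ j) :
    (inclusion2 i j)ᴴ * inclusion2 i j = 1 := by
  have hinj : Function.Injective ![i, j] := by
    simp [Function.Injective, Fin.forall_fin_two, hij, hij.symm]
  ext a b
  simp only [inclusion2, Matrix.mul_apply, Matrix.conjTranspose_apply, Matrix.submatrix_apply, id,
    Matrix.one_apply, apply_ite (star : ℂ → ℂ), star_one, star_zero]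
  simp [hinj.eq_iff, eq_comm]

lemma inclusion2_conjTranspose_mul_cancel {i j : Fin n} (hij : i ≠ j) {m : Type*}
    (x : Matrix (Fin 2) m ℂ) : (inclusion2 i j)ᴴ * (inclusion2 i j * x) = x := by
  rw [← Matrix.mul_assoc, inclusion2_conjTranspose_mul hij, Matrix.one_mul]

lemma embed2_eq {i j : Fin n} (hij : i ≠ j) (u : Matrix (Fin 2) (Fin 2) ℂ) :
    embed2 i j u = inclusion2 i j * u * (inclusion2 i j)ᴴ +
      (1 - inclusion2 i j * (inclusion2 i j)ᴴ) := by
  ext k l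
  simp only [embed2, inclusion2, Matrix.of_apply, Matrix.add_apply, Matrix.sub_apply,
    Matrix.mul_apply, Fin.sum_univ_two, Matrix.conjTranspose_apply, Matrix.submatrix_apply,
    Matrix.one_apply, id, Matrix.cons_val_zero, Matrix.cons_val_one]
  by_cases hki : k = i <;> by_cases hkj : k = j <;> by_cases hli : l = i <;> by_cases hlj : l = j <;>
    simp_all [eq_comm]

lemma embed2_one {i j : Fin n} (hij : i ≠ j) : embed2 i j 1 = 1 := by
  rw [embed2_eq hij]; simp

lemma embed2_mul {i j : Fin n} (hij : i ≠ j) (u v : Matrix (Fin 2) (Fin 2) ℂ) :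
    embed2 i j (u * v) = embed2 i j u * embed2 i j v := by
  simp only [embed2_eq hij, Matrix.mul_add, Matrix.add_mul, Matrix.mul_sub, Matrix.sub_mul,
    Matrix.mul_assoc, inclusion2_conjTranspose_mul_cancel hij, Matrix.mul_one, Matrix.one_mul]
  abel

lemma embed2_conjTranspose {i j : Fin n} (hij : i ≠ j) (u : Matrix (Fin 2) (Fin 2) ℂ) :
    embed2 i j uᴴ = (embed2 i j u)ᴴ := by
  simp [embed2_eq hij, Matrix.conjTranspose_mul, Matrix.mul_assoc]

lemma embed2_mem_UU {i j : Fin n} (hij : i ≠ j) {u : Matrix (Fin 2) (Fin 2) ℂ} (hu : u ∈ UU 2) :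
    embed2 i j u ∈ UU n := by
  change _ * _ = _
  rw [← embed2_conjTranspose hij, ← embed2_mul hij, show u * uᴴ = 1 from hu, embed2_one hij]

lemma continuous_embed2 {i j : Fin n} (hij : i ≠ j) :
    Continuous (embed2 i j : Matrix (Fin 2) (Fin 2) ℂ → _) := by
  simp only [funext (embed2_eq hij)]
  fun_prop

/-- The part of `h` supported on the rows and columns `i, j`. -/
def block2 (i j : Fin n) (h : Matrix (Fin n) (Fin n) ℂ) : Matrix (Fin n) (Fin n) ℂ :=
  inclusion2 i j * ((inclusion2 i j)ᴴ * h * inclusion2 i j) * (inclusion2 i j)ᴴ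

lemma hasDerivAt_embed2_exp {i j : Fin n} (hij : i ≠ j) (x : Matrix (Fin 2) (Fin 2) ℂ) (t : ℝ) :
    HasDerivAt (fun t : ℝ => embed2 i j (NormedSpace.exp (t • x)))
      (embed2 i j (NormedSpace.exp (t • x)) *
        (inclusion2 i j * x * (inclusion2 i j)ᴴ)) t := by
  let φ : Matrix (Fin 2) (Fin 2) ℂ →ₗ[ℝ] Matrix (Fin n) (Fin n) ℂ :=
    { toFun := fun u => inclusion2 i j * u * (inclusion2 i j)ᴴ
      map_add' := fun u v => by simp [Matrix.mul_add, Matrix.add_mul]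
      map_smul' := fun c u => by simp }
  have h := (φ.toContinuousLinearMap.hasFDerivAt.comp_hasDerivAt t
    (hasDerivAt_exp_smul_const x t)).add_const (1 - inclusion2 i j * (inclusion2 i j)ᴴ)
  simp only [funext (embed2_eq hij)]
  have e : (inclusion2 i j * NormedSpace.exp (t • x) * (inclusion2 i j)ᴴ +
      (1 - inclusion2 i j * (inclusion2 i j)ᴴ)) * (inclusion2 i j * x * (inclusion2 i j)ᴴ) =
      inclusion2 i j * (NormedSpace.exp (t • x) * x) * (inclusion2 i j)ᴴ := by
    simp only [Matrix.add_mul, Matrix.sub_mul, Matrix.mul_assoc,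
      inclusion2_conjTranspose_mul_cancel hij, Matrix.one_mul, sub_self, add_zero]
  rw [e]
  exact h

/-- The path `t ↦ (e^{tx})_{ij} e^{th} g` has constant speed `‖h + x‖`, where `x` is viewed as
supported on the rows and columns `i, j`. -/
lemma DU_embed2_exp_mul_le {i j : Fin n} (hij : i ≠ j) {g h : Matrix (Fin n) (Fin n) ℂ}
    {x : Matrix (Fin 2) (Fin 2) ℂ} (hg : g ∈ UU n) (hh : hᴴ = -h) (hxs : xᴴ = -x) :
    DU n g (embed2 i j (NormedSpace.exp x) * (NormedSpace.exp h * g)) ≤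
      ‖h + inclusion2 i j * x * (inclusion2 i j)ᴴ‖ₑ := by
  have skew : ∀ {m : ℕ} {y : Matrix (Fin m) (Fin m) ℂ} (t : ℝ), yᴴ = -y → (t • y)ᴴ = -(t • y) := by
    intro m y t hy
    rw [Matrix.conjTranspose_smul, hy]; simp
  have m1 : ∀ t : ℝ, embed2 i j (NormedSpace.exp (t • x)) ∈ UU n := fun t =>
    embed2_mem_UU hij (exp_mem_UU (skew t hxs))
  have m2 : ∀ t : ℝ, NormedSpace.exp (t • h) * g ∈ UU n := fun t =>
    UU.mul_mem (exp_mem_UU (skew t hh)) hg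
  let γ : ℝ → Matrix (Fin n) (Fin n) ℂ := fun t =>
    embed2 i j (NormedSpace.exp (t • x)) * (NormedSpace.exp (t • h) * g)
  have hγ : ∀ t, HasDerivAt γ (embed2 i j (NormedSpace.exp (t • x)) *
      ((h + inclusion2 i j * x * (inclusion2 i j)ᴴ) * (NormedSpace.exp (t • h) * g))) t := by
    intro t
    have := (hasDerivAt_embed2_exp hij x t).mul ((hasDerivAt_exp_smul_const' h t).mul_const g)
    have e : embed2 i j (NormedSpace.exp (t • x)) * ((h + inclusion2 i j * x * (inclusion2 i j)ᴴ) *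
          (NormedSpace.exp (t • h) * g)) =
        embed2 i j (NormedSpace.exp (t • x)) * (inclusion2 i j * x * (inclusion2 i j)ᴴ) *
          (NormedSpace.exp (t • h) * g) +
        embed2 i j (NormedSpace.exp (t • x)) * (h * NormedSpace.exp (t • h) * g) := by
      simp only [Matrix.add_mul, Matrix.mul_add, Matrix.mul_assoc]
      abel
    rw [e]
    exact this
  have hl : LipschitzWith ‖h + inclusion2 i j * x * (inclusion2 i j)ᴴ‖₊ γ := by
    refine lipschitzWith_of_nnnorm_deriv_le (fun t => (hγ t).differentiableAt) fun t => ?_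
    rw [(hγ t).deriv, ← NNReal.coe_le_coe, coe_nnnorm, coe_nnnorm, norm_UU_mul (m1 t),
      norm_mul_UU (m2 t)]
  have := intrinsicDistE_le_of_lipschitz (S := UU n) (hl.lipschitzOnWith (s := Set.Icc 0 1))
    (fun t _ => UU.mul_mem (m1 t) (m2 t))
  simp only [γ, zero_smul, one_smul, NormedSpace.exp_zero, embed2_one hij, Matrix.one_mul] at this
  rw [DU_eq]
  exact this

/-- Correcting by a rotation in the plane `e_i, e_j` removes the corresponding block of the
velocity of a one-parameter subgroup. -/
lemma exists_embed2_DU_le {i j : Fin n} (hij : i ≠ j) {g h : Matrix (Fin n) (Fin n) ℂ}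
    (hg : g ∈ UU n) (hh : hᴴ = -h) :
    ∃ s ∈ UU 2, DU n g (embed2 i j s * (NormedSpace.exp h * g)) ≤ ‖h - block2 i j h‖ₑ := by
  have hxs : (-((inclusion2 i j)ᴴ * h * inclusion2 i j))ᴴ =
      - -((inclusion2 i j)ᴴ * h * inclusion2 i j) := by
    simp [Matrix.conjTranspose_mul, hh, Matrix.mul_assoc]
  refine ⟨_, exp_mem_UU hxs, (DU_embed2_exp_mul_le hij hg hh hxs).trans_eq ?_⟩
  simp [block2, sub_eq_add_neg]

lemma DU_exp_mul_le (hn : 2 ≤ n) {g h : Matrix (Fin n) (Fin n) ℂ} (hg : g ∈ UU n)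
    (hh : hᴴ = -h) : DU n g (NormedSpace.exp h * g) ≤ ‖h‖ₑ := by
  have hij : (⟨0, by omega⟩ : Fin n) ≠ ⟨1, by omega⟩ := by simp
  have := DU_embed2_exp_mul_le hij (x := 0) hg hh (by simp)
  simpa [NormedSpace.exp_zero, embed2_one hij] using this

lemma block2_apply {i j : Fin n} (hij : i ≠ j) (h : Matrix (Fin n) (Fin n) ℂ) (k l : Fin n) :
    block2 i j h k l = if (k = i ∨ k = j) ∧ (l = i ∨ l = j) then h k l else 0 := by
  have e : (inclusion2 i j)ᴴ * h * inclusion2 i j = h.submatrix ![i, j] ![i, j] := by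
    ext a b
    simp only [inclusion2, Matrix.mul_apply, Matrix.conjTranspose_apply, Matrix.submatrix_apply, id,
      Matrix.one_apply, apply_ite (star : ℂ → ℂ), star_one, star_zero]
    simp
  rw [block2, e]
  simp only [inclusion2, Matrix.mul_apply, Matrix.conjTranspose_apply, Matrix.submatrix_apply, id,
    Matrix.one_apply, apply_ite (star : ℂ → ℂ), star_one, star_zero, Fin.sum_univ_two,
    Matrix.cons_val_zero, Matrix.cons_val_one]
  by_cases hki : k = i <;> by_cases hkj : k = j <;> by_cases hli : l = i <;> by_cases hlj : l = j <;>
    simp_all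

lemma card_pairs (n : ℕ) : (pairs n).card = n.choose 2 := by
  have : (pairs n).card = ∑ j : Fin n, (j : ℕ) := by
    rw [Finset.card_eq_sum_card_fiberwise (f := Prod.snd) (t := Finset.univ) (by simp)]
    refine Finset.sum_congr rfl fun j _ => ?_
    rw [← Fin.card_Iio j]
    refine Finset.card_bij (fun p _ => p.1) ?_ ?_ ?_
    · simp only [pairs, Finset.mem_filter, Finset.mem_univ, true_and, Finset.mem_Iio]
      rintro p ⟨h, rfl⟩
      exact h
    · simp only [pairs, Finset.mem_filter, Finset.mem_univ, true_and]
      rintro p ⟨_, hp⟩ q ⟨_, hq⟩ h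
      exact Prod.ext h (hp.trans hq.symm)
    · intro i hi
      exact ⟨(i, j), by simpa [pairs] using hi, rfl⟩
  rw [this, Fin.sum_univ_eq_sum_range (fun i => i), Finset.sum_range_id, Nat.choose_two_right]

lemma ne_of_mem_pairs {p : Fin n × Fin n} (hp : p ∈ pairs n) : p.1 ≠ p.2 := by
  simp only [pairs, Finset.mem_filter] at hp
  exact hp.2.ne

lemma exists_mem_pairs (hn : 2 ≤ n) (k l : Fin n) :
    ∃ p ∈ pairs n, (k = p.1 ∨ k = p.2) ∧ (l = p.1 ∨ l = p.2) := by
  have key : ∀ k l : Fin n, k ≠ l →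
      ∃ p ∈ pairs n, (k = p.1 ∨ k = p.2) ∧ (l = p.1 ∨ l = p.2) := by
    intro k l h
    rcases lt_or_gt_of_ne h with h | h
    · exact ⟨(k, l), by simpa [pairs] using h, by simp⟩
    · exact ⟨(l, k), by simpa [pairs] using h, by simp⟩
  rcases eq_or_ne k l with rfl | h
  · have : Nontrivial (Fin n) := Fin.nontrivial_iff_two_le.2 hn
    obtain ⟨m, hm⟩ := exists_ne k
    obtain ⟨p, hp, h⟩ := key k m hm.symm
    exact ⟨p, hp, h.1, h.1⟩
  · exact key k l h

lemma sum_norm_sub_block2_sq_le (hn : 2 ≤ n) (h : Matrix (Fin n) (Fin n) ℂ) :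
    ∑ p ∈ pairs n, ‖h - block2 p.1 p.2 h‖ ^ 2 ≤ ((n.choose 2 - 1 : ℕ) : ℝ) * ‖h‖ ^ 2 := by
  have hsq : ∀ a : Matrix (Fin n) (Fin n) ℂ, ‖a‖ ^ 2 = ∑ k, ∑ l, ‖a k l‖ ^ 2 := by
    intro a
    rw [frobenius_norm_def, ← Real.sqrt_eq_rpow, Real.sq_sqrt (by positivity)]
    simp
  simp only [hsq]
  rw [Finset.sum_comm, Finset.mul_sum]
  refine Finset.sum_le_sum fun k _ => ?_
  rw [Finset.sum_comm, Finset.mul_sum]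
  refine Finset.sum_le_sum fun l _ => ?_
  obtain ⟨p₀, hp₀, hkl⟩ := exists_mem_pairs hn k l
  have h0 : ‖(h - block2 p₀.1 p₀.2 h) k l‖ ^ 2 = 0 := by
    rw [Matrix.sub_apply, block2_apply (ne_of_mem_pairs hp₀), if_pos hkl]; simp
  rw [← Finset.add_sum_erase _ _ hp₀, h0, zero_add, ← card_pairs, ← Finset.card_erase_of_mem hp₀,
    ← nsmul_eq_mul]
  refine Finset.sum_le_card_nsmul _ _ _ fun p hp => ?_
  rw [Matrix.sub_apply, block2_apply (ne_of_mem_pairs (Finset.mem_of_mem_erase hp))]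
  split_ifs
  · simp
  · simp

end Embedding

section Correction

variable {n : ℕ}

lemma rpow_sum_enorm_sub_block2_le (hn : 2 ≤ n) (h : Matrix (Fin n) (Fin n) ℂ) :
    (∑ p ∈ pairs n, ‖h - block2 p.1 p.2 h‖ₑ ^ (2 : ℝ)) ^ (1 / 2 : ℝ) ≤
      ((n.choose 2 - 1 : ℕ) : ℝ≥0∞) ^ (1 / 2 : ℝ) * ‖h‖ₑ := by
  have e : ∀ a : Matrix (Fin n) (Fin n) ℂ, ‖a‖ₑ ^ (2 : ℝ) = ENNReal.ofReal (‖a‖ ^ 2) := by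
    intro a
    rw [← ofReal_norm, ENNReal.rpow_two, ENNReal.ofReal_pow (norm_nonneg a)]
  have h1 : ∑ p ∈ pairs n, ‖h - block2 p.1 p.2 h‖ₑ ^ (2 : ℝ) ≤
      ((n.choose 2 - 1 : ℕ) : ℝ≥0∞) * ‖h‖ₑ ^ (2 : ℝ) := by
    simp only [e]
    rw [← ENNReal.ofReal_sum_of_nonneg (fun p _ => by positivity), ← ENNReal.ofReal_natCast,
      ← ENNReal.ofReal_mul (by positivity)]
    exact ENNReal.ofReal_le_ofReal (sum_norm_sub_block2_sq_le hn h)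
  refine (ENNReal.rpow_le_rpow h1 (by norm_num)).trans_eq ?_
  rw [ENNReal.mul_rpow_of_nonneg _ _ (by norm_num), ← ENNReal.rpow_mul]
  norm_num

lemma exists_exp_mul_eq (ε : ℝ) (hε : 0 < ε) : ∃ δ > 0, ∀ a ∈ UU n, ∀ b ∈ UU n, ‖b - a‖ < δ →
    ∃ h : Matrix (Fin n) (Fin n) ℂ, hᴴ = -h ∧ NormedSpace.exp h * a = b ∧
      ‖h‖ₑ ≤ ENNReal.ofReal (1 + ε) * edist a b := by
  obtain ⟨δ, hδ, H⟩ := exists_skew_log (n := n) ε hε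
  refine ⟨δ, hδ, fun a ha b hb hab => ?_⟩
  have e : ‖b * aᴴ - 1‖ = ‖b - a‖ := by
    rw [← norm_mul_UU (UU.conjTranspose_mem ha) (b - a), Matrix.sub_mul, show a * aᴴ = 1 from ha]
  obtain ⟨h, h1, h2, h3⟩ := H (b * aᴴ) (UU.mul_mem hb (UU.conjTranspose_mem ha)) (e ▸ hab)
  refine ⟨h, h1, ?_, ?_⟩
  · rw [h2, Matrix.mul_assoc, UU.conjTranspose_mul ha, Matrix.mul_one]
  · rw [edist_comm, edist_dist, dist_eq_norm, ← ofReal_norm,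
      ← ENNReal.ofReal_mul (by positivity), ← e]
    exact ENNReal.ofReal_le_ofReal h3

lemma exists_local_correction (hn : 2 ≤ n) (ε : ℝ) (hε : 0 < ε) :
    ∃ δ > 0, ∀ a ∈ UU n, ∀ b ∈ UU n, ‖b - a‖ < δ →
    ∃ s : Fin n × Fin n → UU 2,
      (∑ p ∈ pairs n, DU n a (embed2 p.1 p.2 (s p) * b) ^ (2 : ℝ)) ^ (1 / 2 : ℝ) ≤
        ((n.choose 2 - 1 : ℕ) : ℝ≥0∞) ^ (1 / 2 : ℝ) * (ENNReal.ofReal (1 + ε) * edist a b) := by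
  obtain ⟨δ, hδ, H⟩ := exists_exp_mul_eq (n := n) ε hε
  refine ⟨δ, hδ, fun a ha b hb hab => ?_⟩
  obtain ⟨h, hh, rfl, hle⟩ := H a ha b hb hab
  have : ∀ p : Fin n × Fin n, ∃ s : UU 2, p ∈ pairs n →
      DU n a (embed2 p.1 p.2 s * (NormedSpace.exp h * a)) ≤ ‖h - block2 p.1 p.2 h‖ₑ := by
    intro p
    by_cases hp : p ∈ pairs n
    · obtain ⟨s, hs, hs'⟩ := exists_embed2_DU_le (ne_of_mem_pairs hp) ha hh
      exact ⟨⟨s, hs⟩, fun _ => hs'⟩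
    · exact ⟨⟨1, UU.one_mem⟩, fun h => absurd h hp⟩
  choose s hs using this
  refine ⟨s, le_trans (ENNReal.rpow_le_rpow (Finset.sum_le_sum fun p hp =>
    ENNReal.rpow_le_rpow (hs p hp) (by norm_num)) (by norm_num)) ?_⟩
  exact (rpow_sum_enorm_sub_block2_le hn h).trans (by gcongr)

lemma DU_self {a : Matrix (Fin n) (Fin n) ℂ} (ha : a ∈ UU n) : DU n a a = 0 := by
  rw [DU_eq]
  exact le_zero_iff.1 (intrinsicDistE_le_of_lipschitz (γ := fun _ => a) (K := 0)
    (LipschitzWith.const a).lipschitzOnWith (fun _ _ => ha))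

/-- Along a path in `U(n)`, the plane rotations can be chosen so that the endpoints get closer,
in the square mean over all planes. -/
lemma exists_correction_of_path (hn : 2 ≤ n) (ε : ℝ) (hε : 0 < ε)
    {γ : ℝ → Matrix (Fin n) (Fin n) ℂ} (hγ : ContinuousOn γ (Set.Icc 0 1))
    (hU : Set.MapsTo γ (Set.Icc 0 1) (UU n)) :
    ∃ s : Fin n × Fin n → UU 2,
      (∑ p ∈ pairs n, DU n (γ 0) (embed2 p.1 p.2 (s p) * γ 1) ^ (2 : ℝ)) ^ (1 / 2 : ℝ) ≤
        ((n.choose 2 - 1 : ℕ) : ℝ≥0∞) ^ (1 / 2 : ℝ) *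
          (ENNReal.ofReal (1 + ε) * pathLengthE hsDistC γ) := by
  obtain ⟨δ, hδ, H⟩ := exists_local_correction hn ε hε
  obtain ⟨r, hr, hr'⟩ := Metric.uniformContinuousOn_iff.1
    (isCompact_Icc.uniformContinuousOn_of_continuous hγ) δ hδ
  obtain ⟨m, hm⟩ := exists_nat_one_div_lt hr
  have hm0 : (0 : ℝ) < m + 1 := by positivity
  let t : ℕ → ℝ := fun k => k / (m + 1)
  have ht : ∀ k ≤ m + 1, t k ∈ Set.Icc (0 : ℝ) 1 := by
    intro k hk
    refine ⟨by positivity, (div_le_one hm0).2 ?_⟩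
    exact_mod_cast hk
  have t0 : t 0 = 0 := by simp [t]
  have t1 : t (m + 1) = 1 := by simp [t, hm0.ne']
  have hmono : Monotone t := fun i j hij => by
    simp only [t]; gcongr
  have key : ∀ k ≤ m + 1, ∃ s : Fin n × Fin n → UU 2,
      (∑ p ∈ pairs n, DU n (γ 0) (embed2 p.1 p.2 (s p) * γ (t k)) ^ (2 : ℝ)) ^ (1 / 2 : ℝ) ≤
        ((n.choose 2 - 1 : ℕ) : ℝ≥0∞) ^ (1 / 2 : ℝ) * (ENNReal.ofReal (1 + ε) *
          ∑ i ∈ Finset.range k, edist (γ (t i)) (γ (t (i + 1)))) := by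
    intro k
    induction k with
    | zero =>
      intro _
      refine ⟨fun _ => ⟨1, UU.one_mem⟩, ?_⟩
      rw [Finset.sum_eq_zero]
      · simp
      · intro p hp
        rw [t0, embed2_one (ne_of_mem_pairs hp), Matrix.one_mul, DU_self (hU (by simp))]
        simp
    | succ k ih =>
      intro hk
      obtain ⟨s, hs⟩ := ih (by omega)
      have hd : ‖γ (t (k + 1)) - γ (t k)‖ < δ := by
        rw [← dist_eq_norm]
        refine hr' _ (ht _ hk) _ (ht _ (by omega)) ?_
        have : t (k + 1) - t k = 1 / (m + 1) := by
          simp only [t]; push_cast; ring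
        rw [Real.dist_eq, this, abs_of_pos (by positivity)]
        exact hm
      obtain ⟨s', hs'⟩ := H _ (hU (ht k (by omega))) _ (hU (ht _ hk)) hd
      refine ⟨fun p => ⟨s p * s' p, UU.mul_mem (s p).2 (s' p).2⟩, ?_⟩
      rw [Finset.sum_range_succ, mul_add, mul_add]
      refine le_trans ?_ (add_le_add hs hs')
      refine le_trans ?_ (ENNReal.Lp_add_le _ _ _ (by norm_num))
      refine ENNReal.rpow_le_rpow (Finset.sum_le_sum fun p hp => ?_) (by norm_num)
      refine ENNReal.rpow_le_rpow ?_ (by norm_num)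
      rw [embed2_mul (ne_of_mem_pairs hp), Matrix.mul_assoc]
      refine (DU_triangle _ (embed2 p.1 p.2 (s p) * γ (t k)) _).trans (add_le_add le_rfl ?_)
      exact DU_mul_left_le (embed2_mem_UU (ne_of_mem_pairs hp) (s p).2) _ _
  obtain ⟨s, hs⟩ := key (m + 1) le_rfl
  rw [t1] at hs
  refine ⟨s, hs.trans ?_⟩
  gcongr
  rw [hsDistC_eq_edist]
  refine le_trans (le_of_eq ?_) (le_iSup_of_le (m + 1) <|
    le_iSup_of_le (fun i : Fin (m + 2) => t i) <| le_iSup_of_le (fun i j hij => hmono hij) <|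
    le_iSup_of_le (by simp [t0]) <| le_iSup_of_le (by simpa using t1) le_rfl)
  rw [Finset.sum_range]
  rfl

lemma embed2_zero_one (u : Matrix (Fin 2) (Fin 2) ℂ) : embed2 0 1 u = u := by
  ext k l
  fin_cases k <;> fin_cases l <;> simp [embed2]

lemma exists_correction_lt (hn : 2 ≤ n) {x y : Matrix (Fin n) (Fin n) ℂ} (hx : x ∈ UU n)
    (hy : y ∈ UU n) (ε : ℝ≥0∞) (hε : 0 < ε)
    (hfin : ((n.choose 2 - 1 : ℕ) : ℝ≥0∞) * DU n x y ^ (2 : ℝ) ≠ ⊤) :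
    ∃ s : Fin n × Fin n → UU 2,
      ∑ p ∈ pairs n, DU n x (embed2 p.1 p.2 (s p) * y) ^ (2 : ℝ) <
        ((n.choose 2 - 1 : ℕ) : ℝ≥0∞) * DU n x y ^ (2 : ℝ) + ε := by
  by_cases htop : DU n x y = ⊤
  · have hN : n.choose 2 - 1 = 0 := by
      by_contra h
      exact hfin (by rw [htop, ENNReal.top_rpow_of_pos (by norm_num),
        ENNReal.mul_top (by exact_mod_cast h)])
    have hn2 : n = 2 := by
      by_contra h
      have h3 : Nat.choose 3 2 ≤ n.choose 2 := Nat.choose_le_choose 2 (by omega)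
      have : Nat.choose 3 2 = 3 := rfl
      omega
    subst hn2
    refine ⟨fun _ => ⟨x * yᴴ, UU.mul_mem hx (UU.conjTranspose_mem hy)⟩, ?_⟩
    have hp : pairs 2 = {(0, 1)} := by decide
    rw [hp, Finset.sum_singleton, embed2_zero_one, Matrix.mul_assoc, UU.conjTranspose_mul hy,
      Matrix.mul_one, DU_self hx]
    simpa using hε
  · set C : ℝ≥0∞ := ((n.choose 2 - 1 : ℕ) : ℝ≥0∞) with hC
    have hCt : C ≠ ⊤ := ENNReal.natCast_ne_top _
    have hlim : Tendsto (fun r : ℝ => (C ^ (1 / 2 : ℝ) * (ENNReal.ofReal (1 + r) *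
        (DU n x y + ENNReal.ofReal r))) ^ (2 : ℝ)) (𝓝[>] 0) (𝓝 (C * DU n x y ^ (2 : ℝ))) := by
      have h1 : Tendsto (fun r : ℝ => ENNReal.ofReal (1 + r)) (𝓝[>] 0) (𝓝 1) := by
        have : Tendsto (fun r : ℝ => ENNReal.ofReal (1 + r)) (𝓝 0) (𝓝 (ENNReal.ofReal (1 + 0))) :=
          (ENNReal.continuous_ofReal.comp (continuous_const.add continuous_id)).tendsto 0
        simpa using this.mono_left nhdsWithin_le_nhds
      have h2 : Tendsto (fun r : ℝ => DU n x y + ENNReal.ofReal r) (𝓝[>] 0) (𝓝 (DU n x y)) := by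
        have : Tendsto (fun r : ℝ => DU n x y + ENNReal.ofReal r) (𝓝 0)
            (𝓝 (DU n x y + ENNReal.ofReal 0)) :=
          (continuous_const.add ENNReal.continuous_ofReal).tendsto 0
        simpa using this.mono_left nhdsWithin_le_nhds
      have h3 := ENNReal.Tendsto.mul h1 (Or.inl one_ne_zero) h2 (Or.inr one_ne_top)
      have h4 := (ENNReal.Tendsto.const_mul (a := C ^ (1 / 2 : ℝ)) h3
        (Or.inr (ENNReal.rpow_ne_top_of_nonneg (by norm_num) hCt))).ennrpow_const 2
      convert h4 using 2
      rw [one_mul, ENNReal.mul_rpow_of_nonneg _ _ (by norm_num), ← ENNReal.rpow_mul]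
      norm_num
    have hlt : C * DU n x y ^ (2 : ℝ) < C * DU n x y ^ (2 : ℝ) + ε :=
      ENNReal.lt_add_right hfin hε.ne'
    obtain ⟨r, hr, hr0⟩ := ((hlim.eventually_lt_const hlt).and self_mem_nhdsWithin).exists
    have hr0 : 0 < r := hr0
    have hD : DU n x y < DU n x y + ENNReal.ofReal r :=
      ENNReal.lt_add_right htop (by simpa using hr0)
    nth_rw 1 [DU, intrinsicDistE] at hD
    simp only [iInf_lt_iff] at hD
    obtain ⟨γ, hγ, hU, rfl, rfl, hlen⟩ := hD
    obtain ⟨s, hs⟩ := exists_correction_of_path hn r hr0 hγ hU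
    refine ⟨s, lt_of_le_of_lt ?_ hr⟩
    rw [← ENNReal.rpow_inv_le_iff (by norm_num), ← one_div]
    exact hs.trans (by gcongr)

end Correction

section Selection

variable {n : ℕ}

lemma exists_DU_le (hn : 2 ≤ n) (η : ℝ≥0) (hη : 0 < η) :
    ∃ δ > 0, ∀ a ∈ UU n, ∀ b ∈ UU n, ‖b - a‖ < δ → DU n a b ≤ η := by
  obtain ⟨δ, hδ, H⟩ := exists_exp_mul_eq (n := n) 1 one_pos
  refine ⟨min δ (η / 2), by positivity, fun a ha b hb hab => ?_⟩
  obtain ⟨h, hh, rfl, hle⟩ := H a ha b hb (hab.trans_le (min_le_left _ _))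
  refine (DU_exp_mul_le hn ha hh).trans (hle.trans ?_)
  rw [edist_comm, edist_dist, dist_eq_norm, ← ENNReal.ofReal_mul (by norm_num),
    ← ENNReal.ofReal_coe_nnreal]
  refine ENNReal.ofReal_le_ofReal ?_
  have := hab.le.trans (min_le_right _ _)
  linarith

lemma continuous_DU (hn : 2 ≤ n) :
    Continuous fun z : UU n × UU n => DU n z.1 z.2 := by
  rw [continuous_iff_continuousAt]
  intro z₀
  have near : ∀ η : ℝ≥0, 0 < η → ∀ᶠ z : UU n × UU n in 𝓝 z₀,
      DU n z.1 z.2 ≤ DU n z₀.1 z₀.2 + η ∧ DU n z₀.1 z₀.2 ≤ DU n z.1 z.2 + η := by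
    intro η hη
    obtain ⟨δ, hδ, H⟩ := exists_DU_le hn (η / 2) (by positivity)
    have c₁ : Continuous fun z : UU n × UU n =>
        ‖(z.1 : Matrix (Fin n) (Fin n) ℂ) - (z₀.1 : Matrix (Fin n) (Fin n) ℂ)‖ :=
      continuous_norm.comp ((continuous_subtype_val.comp continuous_fst).sub continuous_const)
    have c₂ : Continuous fun z : UU n × UU n =>
        ‖(z.2 : Matrix (Fin n) (Fin n) ℂ) - (z₀.2 : Matrix (Fin n) (Fin n) ℂ)‖ :=
      continuous_norm.comp ((continuous_subtype_val.comp continuous_snd).sub continuous_const)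
    have e₁ := (c₁.tendsto z₀).eventually_lt_const (u := δ) (by simpa using hδ)
    have e₂ := (c₂.tendsto z₀).eventually_lt_const (u := δ) (by simpa using hδ)
    have hsum : ((η / 2 : ℝ≥0) : ℝ≥0∞) + ((η / 2 : ℝ≥0) : ℝ≥0∞) = η := by
      rw [← ENNReal.coe_add, add_halves]
    filter_upwards [e₁, e₂] with z h₁ h₂
    have four : ∀ a b c d : Matrix (Fin n) (Fin n) ℂ, DU n a b ≤ ((η / 2 : ℝ≥0) : ℝ≥0∞) →
        DU n c d ≤ ((η / 2 : ℝ≥0) : ℝ≥0∞) → DU n a d ≤ DU n b c + η := by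
      intro a b c d hab hcd
      calc DU n a d ≤ DU n a b + (DU n b c + DU n c d) :=
            (DU_triangle a b d).trans (add_le_add le_rfl (DU_triangle b c d))
        _ ≤ (η / 2 : ℝ≥0) + (DU n b c + (η / 2 : ℝ≥0)) := by gcongr
        _ = DU n b c + η := by rw [← hsum]; ring
    exact ⟨four _ _ _ _ (H _ z.1.2 _ z₀.1.2 (by rwa [norm_sub_rev])) (H _ z₀.2.2 _ z.2.2 h₂),
      four _ _ _ _ (H _ z₀.1.2 _ z.1.2 h₁) (H _ z.2.2 _ z₀.2.2 (by rwa [norm_sub_rev]))⟩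
  refine tendsto_order.2 ⟨fun c hc => ?_, fun c hc => ?_⟩
  · obtain ⟨η, hη, hlt⟩ := ENNReal.lt_iff_exists_add_pos_lt.1 hc
    filter_upwards [near η hη] with z hz
    exact lt_of_add_lt_add_right (hlt.trans_le hz.2)
  · obtain ⟨η, hη, hlt⟩ := ENNReal.lt_iff_exists_add_pos_lt.1 hc
    filter_upwards [near η hη] with z hz
    exact hz.1.trans_lt hlt

instance {m k : ℕ} : SecondCountableTopology (Matrix (Fin m) (Fin k) ℂ) :=
  inferInstanceAs (SecondCountableTopology (Fin m → Fin k → ℂ))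

instance {m k : ℕ} : BorelSpace (Matrix (Fin m) (Fin k) ℂ) :=
  inferInstanceAs (BorelSpace (Fin m → Fin k → ℂ))

lemma continuous_sum_DU_rpow (hn : 2 ≤ n) :
    Continuous fun w : (UU n × UU n) × (Fin n × Fin n → UU 2) =>
      ∑ p ∈ pairs n, DU n w.1.1 (embed2 p.1 p.2 (w.2 p) * w.1.2) ^ (2 : ℝ) := by
  refine continuous_finsetSum _ fun p hp => ?_
  have hij := ne_of_mem_pairs hp
  have h₁ : Continuous fun w : (UU n × UU n) × (Fin n × Fin n → UU 2) =>
      embed2 p.1 p.2 (w.2 p : Matrix (Fin 2) (Fin 2) ℂ) :=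
    (continuous_embed2 hij).comp
      (continuous_subtype_val.comp ((continuous_apply p).comp continuous_snd))
  have h₂ : Continuous fun w : (UU n × UU n) × (Fin n × Fin n → UU 2) =>
      (w.1.2 : Matrix (Fin n) (Fin n) ℂ) :=
    continuous_subtype_val.comp (continuous_snd.comp continuous_fst)
  have h₃ : Continuous fun w : (UU n × UU n) × (Fin n × Fin n → UU 2) =>
      (⟨embed2 p.1 p.2 (w.2 p : Matrix (Fin 2) (Fin 2) ℂ) * w.1.2,
        UU.mul_mem (embed2_mem_UU hij (w.2 p).2) w.1.2.2⟩ : UU n) :=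
    (h₁.matrix_mul h₂).subtype_mk _
  have h₄ := (continuous_fst.comp continuous_fst).prodMk h₃
  have h₅ := (continuous_DU hn).comp h₄
  simp only [Function.comp_def] at h₅
  exact ENNReal.continuous_rpow_const.comp h₅

/-- The plane rotations bringing `y` closer to `x` can be chosen measurably. -/
lemma exists_measurable_correction (hn : 2 ≤ n) (ε : ℝ≥0∞) (hε : 0 < ε) :
    ∃ σ : Fin n × Fin n → Matrix (Fin n) (Fin n) ℂ × Matrix (Fin n) (Fin n) ℂ →
        Matrix (Fin 2) (Fin 2) ℂ,
      (∀ p, Measurable (σ p)) ∧ (∀ p z, σ p z ∈ UU 2) ∧ ∀ x ∈ UU n, ∀ y ∈ UU n,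
        ∑ p ∈ pairs n, DU n x (embed2 p.1 p.2 (σ p (x, y)) * y) ^ (2 : ℝ) ≤
          ((n.choose 2 - 1 : ℕ) : ℝ≥0∞) * DU n x y ^ (2 : ℝ) + ε := by
  classical
  let cost : (UU n × UU n) × (Fin n × Fin n → UU 2) → ℝ≥0∞ := fun w =>
    ∑ p ∈ pairs n, DU n w.1.1 (embed2 p.1 p.2 (w.2 p) * w.1.2) ^ (2 : ℝ)
  have hcost : Continuous cost := continuous_sum_DU_rpow hn
  have : Nonempty (UU 2) := ⟨⟨1, UU.one_mem⟩⟩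
  let s := TopologicalSpace.denseSeq (Fin n × Fin n → UU 2)
  let bound : UU n × UU n → ℝ≥0∞ := fun z =>
    ((n.choose 2 - 1 : ℕ) : ℝ≥0∞) * DU n z.1 z.2 ^ (2 : ℝ) + ε
  have hbound : Continuous bound :=
    ((ENNReal.continuous_const_mul (ENNReal.natCast_ne_top _)).comp
      (ENNReal.continuous_rpow_const.comp (continuous_DU hn))).add continuous_const
  have hex : ∀ z, ∃ m, cost (z, s m) ≤ bound z := by
    intro z
    by_cases hfin : ((n.choose 2 - 1 : ℕ) : ℝ≥0∞) * DU n z.1 z.2 ^ (2 : ℝ) = ⊤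
    · exact ⟨0, by simp only [bound, hfin, top_add, le_top]⟩
    · obtain ⟨s₀, hs₀⟩ := exists_correction_lt hn z.1.2 z.2.2 ε hε hfin
      have ho : IsOpen {t | cost (z, t) < bound z} :=
        isOpen_lt (hcost.comp (by fun_prop)) continuous_const
      obtain ⟨m, hm⟩ := (TopologicalSpace.denseRange_denseSeq _).exists_mem_open ho ⟨s₀, hs₀⟩
      exact ⟨m, le_of_lt hm⟩
  let K : Set (Matrix (Fin n) (Fin n) ℂ × Matrix (Fin n) (Fin n) ℂ) := UU n ×ˢ UU n
  have hK : IsClosed K := isClosed_UU.prod isClosed_UU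
  let ι : UU n × UU n → Matrix (Fin n) (Fin n) ℂ × Matrix (Fin n) (Fin n) ℂ :=
    Prod.map Subtype.val Subtype.val
  have hι : IsClosedEmbedding ι :=
    isClosed_UU.isClosedEmbedding_subtypeVal.prodMap isClosed_UU.isClosedEmbedding_subtypeVal
  let P : Matrix (Fin n) (Fin n) ℂ × Matrix (Fin n) (Fin n) ℂ → ℕ → Prop := fun z m =>
    z ∈ ι '' {w | cost (w, s m) ≤ bound w} ∪ Kᶜ
  have hP : ∀ z, ∃ m, P z m := by
    intro z
    by_cases hz : z ∈ K
    · obtain ⟨m, hm⟩ := hex (⟨z.1, hz.1⟩, ⟨z.2, hz.2⟩)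
      exact ⟨m, Or.inl ⟨_, hm, rfl⟩⟩
    · exact ⟨0, Or.inr hz⟩
  have hPm : ∀ m, MeasurableSet {z | P z m} := fun m =>
    ((hι.isClosedMap _ (isClosed_le (hcost.comp (by fun_prop)) hbound)).measurableSet).union
      hK.measurableSet.compl
  have hfind : Measurable fun z => Nat.find (hP z) := measurable_find hP hPm
  refine ⟨fun p z => s (Nat.find (hP z)) p, fun p => ?_, fun p z => (s _ p).2, ?_⟩
  · exact (measurable_from_nat (f := fun m => (s m p : Matrix (Fin 2) (Fin 2) ℂ))).comp hfind
  · intro x hx y hy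
    rcases Nat.find_spec (hP (x, y)) with ⟨w, hw, hwe⟩ | h
    · have hwe' : w = (⟨x, hx⟩, ⟨y, hy⟩) := by
        apply hι.injective
        exact hwe
      subst hwe'
      exact hw
    · exact absurd ⟨hx, hy⟩ h

end Selection

section Contraction

variable {n : ℕ}

lemma measurable_embed2_mul {i j : Fin n} (hij : i ≠ j) :
    Measurable fun w : Matrix (Fin n) (Fin n) ℂ × Matrix (Fin 2) (Fin 2) ℂ =>
      embed2 i j w.2 * w.1 :=
  (((continuous_embed2 hij).comp continuous_snd).matrix_mul continuous_fst).measurable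

lemma unitKernel_apply (x : Matrix (Fin n) (Fin n) ℂ) {s : Set (Matrix (Fin n) (Fin n) ℂ)}
    (hs : MeasurableSet s) :
    unitKernel n x s = (n.choose 2 : ℝ≥0∞)⁻¹ * ∑ p ∈ pairs n,
      haarLike (UU 2) (Prod.mk x ⁻¹' ((fun w : Matrix (Fin n) (Fin n) ℂ ×
        Matrix (Fin 2) (Fin 2) ℂ => embed2 p.1 p.2 w.2 * w.1) ⁻¹' s)) := by
  rw [unitKernel, Measure.smul_apply, Measure.finsetSum_apply, smul_eq_mul]
  congr 1
  refine Finset.sum_congr rfl fun p hp => ?_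
  have hm := (measurable_embed2_mul (ne_of_mem_pairs hp)).comp (measurable_prodMk_left (x := x))
  simp only [Function.comp_def] at hm
  rw [Measure.map_apply hm hs, Set.preimage_preimage]

lemma measurable_unitKernel [SFinite (haarLike (UU 2))] : Measurable (unitKernel n) := by
  refine Measure.measurable_of_measurable_coe _ fun s hs => ?_
  simp only [unitKernel_apply _ hs]
  exact (Finset.measurable_fun_sum _ fun p hp => measurable_measure_prodMk_left
    (measurable_embed2_mul (ne_of_mem_pairs hp) hs)).const_mul _

lemma bind_unitKernel (μ : Measure (Matrix (Fin n) (Fin n) ℂ)) [SFinite μ]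
    [SFinite (haarLike (UU 2))] :
    μ.bind (unitKernel n) = (n.choose 2 : ℝ≥0∞)⁻¹ • ∑ p ∈ pairs n,
      (μ.prod (haarLike (UU 2))).map fun w => embed2 p.1 p.2 w.2 * w.1 := by
  ext s hs
  have hm : ∀ p ∈ pairs n, MeasurableSet ((fun w : Matrix (Fin n) (Fin n) ℂ ×
      Matrix (Fin 2) (Fin 2) ℂ => embed2 p.1 p.2 w.2 * w.1) ⁻¹' s) := fun p hp =>
    measurable_embed2_mul (ne_of_mem_pairs hp) hs
  rw [Measure.bind_apply hs measurable_unitKernel.aemeasurable, Measure.smul_apply,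
    Measure.finsetSum_apply, smul_eq_mul]
  simp only [unitKernel_apply _ hs]
  rw [lintegral_const_mul _ (Finset.measurable_fun_sum _ fun p hp =>
      measurable_measure_prodMk_left (hm p hp)),
    lintegral_finsetSum _ fun p hp => measurable_measure_prodMk_left (hm p hp)]
  congr 1
  refine Finset.sum_congr rfl fun p hp => ?_
  rw [Measure.map_apply (measurable_embed2_mul (ne_of_mem_pairs hp)) hs,
    Measure.prod_apply (hm p hp)]

/-- One joint step of the two walks: both coordinates use the same plane and the same Haar
rotation `u`, after the second coordinate has been corrected by `σ`. -/
def jointStep (σ : Fin n × Fin n → Matrix (Fin n) (Fin n) ℂ × Matrix (Fin n) (Fin n) ℂ →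
      Matrix (Fin 2) (Fin 2) ℂ)
    (η : Measure (Matrix (Fin n) (Fin n) ℂ × Matrix (Fin n) (Fin n) ℂ)) :
    Measure (Matrix (Fin n) (Fin n) ℂ × Matrix (Fin n) (Fin n) ℂ) :=
  (n.choose 2 : ℝ≥0∞)⁻¹ • ∑ p ∈ pairs n, (η.prod (haarLike (UU 2))).map fun w =>
    (embed2 p.1 p.2 w.2 * w.1.1, embed2 p.1 p.2 (w.2 * σ p w.1) * w.1.2)

lemma isCoupling_jointStep (hH : IsHaarLike (UU 2) (haarLike (UU 2)))
    {σ : Fin n × Fin n → Matrix (Fin n) (Fin n) ℂ × Matrix (Fin n) (Fin n) ℂ →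
      Matrix (Fin 2) (Fin 2) ℂ}
    (hσ : ∀ p, Measurable (σ p)) (hσU : ∀ p z, σ p z ∈ UU 2)
    {η : Measure (Matrix (Fin n) (Fin n) ℂ × Matrix (Fin n) (Fin n) ℂ)}
    {μ ν : Measure (Matrix (Fin n) (Fin n) ℂ)} [SFinite η] [SFinite μ] [SFinite ν]
    (hη : IsCoupling η μ ν) :
    IsCoupling (jointStep σ η) (μ.bind (unitKernel n)) (ν.bind (unitKernel n)) := by
  have := hH.1
  have hfst : MeasurePreserving
      (fun w : (Matrix (Fin n) (Fin n) ℂ × Matrix (Fin n) (Fin n) ℂ) ×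
        Matrix (Fin 2) (Fin 2) ℂ => (w.1.1, w.2))
      (η.prod (haarLike (UU 2))) (μ.prod (haarLike (UU 2))) :=
    MeasurePreserving.skew_product (g := fun _ u => u) ⟨measurable_fst, hη.1⟩ measurable_snd
      (ae_of_all _ fun _ => Measure.map_id')
  have hmul : ∀ p : Fin n × Fin n, Measurable (Function.uncurry
      fun (z : Matrix (Fin n) (Fin n) ℂ × Matrix (Fin n) (Fin n) ℂ)
        (u : Matrix (Fin 2) (Fin 2) ℂ) => u * σ p z) := by
    intro p
    have hc : Measurable fun w : Matrix (Fin 2) (Fin 2) ℂ × Matrix (Fin 2) (Fin 2) ℂ =>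
        w.1 * w.2 := (continuous_fst.matrix_mul continuous_snd).measurable
    exact hc.comp (measurable_snd.prodMk ((hσ p).comp measurable_fst))
  have hsnd : ∀ p : Fin n × Fin n, MeasurePreserving
      (fun w : (Matrix (Fin n) (Fin n) ℂ × Matrix (Fin n) (Fin n) ℂ) ×
        Matrix (Fin 2) (Fin 2) ℂ => (w.1.2, w.2 * σ p w.1))
      (η.prod (haarLike (UU 2))) (ν.prod (haarLike (UU 2))) := fun p =>
    MeasurePreserving.skew_product ⟨measurable_snd, hη.2⟩ (hmul p)
      (ae_of_all _ fun z => (hH.2.2 _ (hσU p z)).2)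
  have hm₁ : ∀ p ∈ pairs n, Measurable
      fun w : (Matrix (Fin n) (Fin n) ℂ × Matrix (Fin n) (Fin n) ℂ) ×
        Matrix (Fin 2) (Fin 2) ℂ => embed2 p.1 p.2 w.2 * w.1.1 := by
    intro p hp
    have h := (measurable_embed2_mul (ne_of_mem_pairs hp)).comp hfst.measurable
    simpa only [Function.comp_def] using h
  have hm₂ : ∀ p ∈ pairs n, Measurable
      fun w : (Matrix (Fin n) (Fin n) ℂ × Matrix (Fin n) (Fin n) ℂ) ×
        Matrix (Fin 2) (Fin 2) ℂ => embed2 p.1 p.2 (w.2 * σ p w.1) * w.1.2 := by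
    intro p hp
    have h := (measurable_embed2_mul (ne_of_mem_pairs hp)).comp (hsnd p).measurable
    simpa only [Function.comp_def] using h
  constructor
  · rw [bind_unitKernel, jointStep, Measure.map_smul,
      Measure.map_finset_sum measurable_fst.aemeasurable]
    congr 1
    refine Finset.sum_congr rfl fun p hp => ?_
    rw [Measure.map_map measurable_fst ((hm₁ p hp).prodMk (hm₂ p hp)), ← hfst.map_eq,
      Measure.map_map (measurable_embed2_mul (ne_of_mem_pairs hp)) hfst.measurable]
    simp only [Function.comp_def]
  · rw [bind_unitKernel, jointStep, Measure.map_smul,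
      Measure.map_finset_sum measurable_snd.aemeasurable]
    congr 1
    refine Finset.sum_congr rfl fun p hp => ?_
    rw [Measure.map_map measurable_snd ((hm₁ p hp).prodMk (hm₂ p hp)), ← (hsnd p).map_eq,
      Measure.map_map (measurable_embed2_mul (ne_of_mem_pairs hp)) (hsnd p).measurable]
    simp only [Function.comp_def]

lemma sum_lintegral_le {α ι : Type*} [MeasurableSpace α] (μ : Measure α) (s : Finset ι)
    (f : ι → α → ℝ≥0∞) : ∑ i ∈ s, ∫⁻ a, f i a ∂μ ≤ ∫⁻ a, ∑ i ∈ s, f i a ∂μ := by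
  classical
  induction s using Finset.induction_on with
  | empty => simp
  | insert i s hi ih =>
    simp only [Finset.sum_insert hi]
    exact (add_le_add le_rfl ih).trans (le_lintegral_add _ _)

lemma lintegral_jointStep_le (hH : IsHaarLike (UU 2) (haarLike (UU 2)))
    {σ : Fin n × Fin n → Matrix (Fin n) (Fin n) ℂ × Matrix (Fin n) (Fin n) ℂ →
      Matrix (Fin 2) (Fin 2) ℂ}
    (η : Measure (Matrix (Fin n) (Fin n) ℂ × Matrix (Fin n) (Fin n) ℂ)) :
    ∫⁻ z, DU n z.1 z.2 ^ (2 : ℝ) ∂jointStep σ η ≤ (n.choose 2 : ℝ≥0∞)⁻¹ *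
      ∫⁻ z, ∑ p ∈ pairs n, DU n z.1 (embed2 p.1 p.2 (σ p z) * z.2) ^ (2 : ℝ) ∂η := by
  have := hH.1
  rw [jointStep, lintegral_smul_measure, lintegral_finsetSum_measure, smul_eq_mul]
  refine mul_le_mul_right ((Finset.sum_le_sum fun p hp => ?_).trans (sum_lintegral_le _ _ _)) _
  refine (lintegral_map_le _ _).trans ((lintegral_prod_le _).trans (lintegral_mono fun z => ?_))
  have hae : ∀ᵐ u ∂haarLike (UU 2), u ∈ UU 2 := hH.2.1
  calc ∫⁻ u, DU n (embed2 p.1 p.2 u * z.1) (embed2 p.1 p.2 (u * σ p z) * z.2) ^ (2 : ℝ)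
          ∂haarLike (UU 2)
      ≤ ∫⁻ _, DU n z.1 (embed2 p.1 p.2 (σ p z) * z.2) ^ (2 : ℝ) ∂haarLike (UU 2) := by
        refine lintegral_mono_ae (hae.mono fun u hu => ?_)
        rw [embed2_mul (ne_of_mem_pairs hp), Matrix.mul_assoc]
        exact ENNReal.rpow_le_rpow
          (DU_mul_left_le (embed2_mem_UU (ne_of_mem_pairs hp) hu) _ _) (by norm_num)
    _ = DU n z.1 (embed2 p.1 p.2 (σ p z) * z.2) ^ (2 : ℝ) := by simp

lemma wassersteinE_le {X : Type*} [MeasurableSpace X] {d : X → X → ℝ≥0∞} {p : ℝ}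
    {μ ν : Measure X} {η : Measure (X × X)} (hη : IsCoupling η μ ν) :
    wassersteinE d p μ ν ≤ (∫⁻ z, d z.1 z.2 ^ p ∂η) ^ (1 / p) :=
  iInf₂_le η hη

lemma wassersteinE_bind_unitKernel_rpow_le (hn : 2 ≤ n)
    (hH : IsHaarLike (UU 2) (haarLike (UU 2)))
    {η : Measure (Matrix (Fin n) (Fin n) ℂ × Matrix (Fin n) (Fin n) ℂ)}
    {μ ν : Measure (Matrix (Fin n) (Fin n) ℂ)} [IsProbabilityMeasure η]
    [IsProbabilityMeasure μ] [IsProbabilityMeasure ν]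
    (hμU : μ (UU n)ᶜ = 0) (hνU : ν (UU n)ᶜ = 0) (hη : IsCoupling η μ ν) :
    wassersteinE (DU n) 2 (μ.bind (unitKernel n)) (ν.bind (unitKernel n)) ^ (2 : ℝ) ≤
      (n.choose 2 : ℝ≥0∞)⁻¹ * (((n.choose 2 - 1 : ℕ) : ℝ≥0∞) *
        ∫⁻ z, DU n z.1 z.2 ^ (2 : ℝ) ∂η) := by
  refine ENNReal.le_of_forall_pos_le_add fun ε hε _ => ?_
  obtain ⟨σ, hσ, hσU, hle⟩ := exists_measurable_correction hn ε (by exact_mod_cast hε)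
  have hae₁ : ∀ᵐ z ∂η, z.1 ∈ UU n :=
    ae_of_ae_map measurable_fst.aemeasurable (p := (· ∈ UU n)) (by rw [hη.1]; exact hμU)
  have hae₂ : ∀ᵐ z ∂η, z.2 ∈ UU n :=
    ae_of_ae_map measurable_snd.aemeasurable (p := (· ∈ UU n)) (by rw [hη.2]; exact hνU)
  have hN : (1 : ℝ≥0∞) ≤ n.choose 2 := by exact_mod_cast Nat.choose_pos hn
  calc wassersteinE (DU n) 2 (μ.bind (unitKernel n)) (ν.bind (unitKernel n)) ^ (2 : ℝ)
      ≤ ((∫⁻ z, DU n z.1 z.2 ^ (2 : ℝ) ∂jointStep σ η) ^ (1 / (2 : ℝ))) ^ (2 : ℝ) :=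
        ENNReal.rpow_le_rpow (wassersteinE_le (isCoupling_jointStep hH hσ hσU hη)) (by norm_num)
    _ = ∫⁻ z, DU n z.1 z.2 ^ (2 : ℝ) ∂jointStep σ η := by
        rw [← ENNReal.rpow_mul, one_div, inv_mul_cancel₀ two_ne_zero, ENNReal.rpow_one]
    _ ≤ (n.choose 2 : ℝ≥0∞)⁻¹ *
          ∫⁻ z, ∑ p ∈ pairs n, DU n z.1 (embed2 p.1 p.2 (σ p z) * z.2) ^ (2 : ℝ) ∂η :=
        lintegral_jointStep_le hH η
    _ ≤ (n.choose 2 : ℝ≥0∞)⁻¹ *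
          ∫⁻ z, (((n.choose 2 - 1 : ℕ) : ℝ≥0∞) * DU n z.1 z.2 ^ (2 : ℝ) + ε) ∂η := by
        refine mul_le_mul_right (lintegral_mono_ae ?_) _
        filter_upwards [hae₁, hae₂] with z h₁ h₂
        exact hle _ h₁ _ h₂
    _ = (n.choose 2 : ℝ≥0∞)⁻¹ * (((n.choose 2 - 1 : ℕ) : ℝ≥0∞) *
          ∫⁻ z, DU n z.1 z.2 ^ (2 : ℝ) ∂η) + (n.choose 2 : ℝ≥0∞)⁻¹ * ε := by
        rw [lintegral_add_right _ measurable_const,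
          lintegral_const_mul' _ _ (ENNReal.natCast_ne_top _), lintegral_const, measure_univ,
          mul_one, mul_add]
    _ ≤ _ := add_le_add le_rfl (mul_le_of_le_one_left' (ENNReal.inv_le_one.2 hN))

lemma rpow_contraction_constant (hn : 2 ≤ n) :
    ((n.choose 2 : ℝ≥0∞)⁻¹ * ((n.choose 2 - 1 : ℕ) : ℝ≥0∞)) ^ (1 / (2 : ℝ)) =
      ENNReal.ofReal (Real.sqrt (1 - 1 / (n.choose 2 : ℝ))) := by
  have hN : 0 < n.choose 2 := Nat.choose_pos hn
  have hN' : (0 : ℝ) < n.choose 2 := by exact_mod_cast hN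
  have h : (1 - 1 / (n.choose 2 : ℝ)) = (n.choose 2 : ℝ)⁻¹ * ((n.choose 2 - 1 : ℕ) : ℝ) := by
    rw [Nat.cast_sub hN, Nat.cast_one]
    field_simp
  rw [h, Real.sqrt_eq_rpow, ← ENNReal.ofReal_rpow_of_nonneg (by positivity) (by norm_num),
    ENNReal.ofReal_mul (by positivity), ENNReal.ofReal_inv_of_pos hN', ENNReal.ofReal_natCast,
    ENNReal.ofReal_natCast]

lemma wassersteinE_bind_unitKernel_le (hn : 2 ≤ n)
    (hH : IsHaarLike (UU 2) (haarLike (UU 2)))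
    {η : Measure (Matrix (Fin n) (Fin n) ℂ × Matrix (Fin n) (Fin n) ℂ)}
    {μ ν : Measure (Matrix (Fin n) (Fin n) ℂ)}
    [IsProbabilityMeasure μ] [IsProbabilityMeasure ν]
    (hμU : μ (UU n)ᶜ = 0) (hνU : ν (UU n)ᶜ = 0) (hη : IsCoupling η μ ν) :
    wassersteinE (DU n) 2 (μ.bind (unitKernel n)) (ν.bind (unitKernel n)) ≤
      ENNReal.ofReal (Real.sqrt (1 - 1 / (n.choose 2 : ℝ))) *
        (∫⁻ z, DU n z.1 z.2 ^ (2 : ℝ) ∂η) ^ (1 / (2 : ℝ)) := by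
  have : IsProbabilityMeasure η := ⟨by
    rw [← Set.preimage_univ (f := Prod.fst), ← Measure.map_apply measurable_fst .univ, hη.1,
      measure_univ]⟩
  have h := ENNReal.rpow_le_rpow (wassersteinE_bind_unitKernel_rpow_le hn hH hμU hνU hη)
    (z := 1 / (2 : ℝ)) (by norm_num)
  rwa [← mul_assoc, ENNReal.mul_rpow_of_nonneg _ _ (by norm_num), rpow_contraction_constant hn,
    ← ENNReal.rpow_mul, mul_one_div_cancel two_ne_zero, ENNReal.rpow_one] at h

end Contraction

/-- For every `n ≥ 2`, the random walk kernel `L` on `U(n)` is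
`√(1 - 1/C(n,2))`-contracting in the `L²` Wasserstein metric for the intrinsic metric `D`:
for all probability measures `μ, ν` on `U(n)`,
`W_{D,2}(μL, νL) ≤ √(1 - 1/C(n,2)) · W_{D,2}(μ, ν)`. -/
theorem unitary_walk_kernel_contracting (n : ℕ) (hn : 2 ≤ n)
    (μ ν : Measure (Matrix (Fin n) (Fin n) ℂ))
    (hμprob : IsProbabilityMeasure μ) (hνprob : IsProbabilityMeasure ν)
    (hμU : μ (UU n)ᶜ = 0) (hνU : ν (UU n)ᶜ = 0) :
    wassersteinE (DU n) 2 (μ.bind (unitKernel n)) (ν.bind (unitKernel n)) ≤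
      ENNReal.ofReal (Real.sqrt (1 - 1 / (n.choose 2 : ℝ))) *
        wassersteinE (DU n) 2 μ ν := by
  by_cases hex : ∃ H : Measure (Matrix (Fin 2) (Fin 2) ℂ), IsHaarLike (UU 2) H
  · have hH : IsHaarLike (UU 2) (haarLike (UU 2)) := by
      rw [haarLike, dif_pos hex]
      exact hex.choose_spec
    have hle := fun η (hη : IsCoupling η μ ν) =>
      wassersteinE_bind_unitKernel_le hn hH hμU hνU hη
    by_cases hc : ENNReal.ofReal (Real.sqrt (1 - 1 / (n.choose 2 : ℝ))) = 0
    · have h := hle (μ.prod ν) ⟨by simp, by simp⟩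
      rw [hc, zero_mul] at h ⊢
      exact h
    · rw [wassersteinE.eq_def (DU n) 2 μ ν, ENNReal.mul_iInf_of_ne hc ENNReal.ofReal_ne_top]
      refine le_iInf fun η => ?_
      rw [ENNReal.mul_iInf_of_ne hc ENNReal.ofReal_ne_top]
      exact le_iInf fun hη => hle η hη
  · have hzero : haarLike (UU 2) = 0 := by rw [haarLike, dif_neg hex]
    have hk : unitKernel n = fun _ => 0 := by
      funext x
      simp [unitKernel, hzero]
    have h : wassersteinE (DU n) 2 (0 : Measure (Matrix (Fin n) (Fin n) ℂ)) 0 ≤ _ :=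
      wassersteinE_le (η := 0) ⟨by simp, by simp⟩
    rw [hk, Measure.bind_zero_right', Measure.bind_zero_right']
    refine h.trans ?_
    simp

end
end

section
/- Let (M,d) be a compact metric space and (G, d̃) a compact metric group acting isometrically on M (so d(gx,gy) = d(x,y) for all g ∈ G, x,y ∈ M) with d̃(g,h) ≥ sup_{x∈M} d(gx,hx) for all g,h ∈ G. Let α be a Borel probability measure on G with support H, and let P be the Markov kernel on M with P_x equal to the law of h·x when h is drawn from α. Suppose there exist a Borel probability measure μ_* on M, an integer τ ≥ 1, ε > 0, and p ≥ 1 such that W_{d,p}(P_x^τ, μ_*) ≤ ε for every x ∈ M. Then τ · ln C̃_H(ε/τ) ≥ ln N_M(8ε) − ln 2, where N_M(r) is the largest cardinality of a subset S ⊆ M whose points are at pairwise distances > r, and C̃_H(r) is the minimal number of open d̃-balls of radius r needed to cover H. -/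
open MeasureTheory ENNReal Filter Topology Matrix

noncomputable section

/-- The `r`-packing number of `M`: the largest cardinality of a subset of `M` whose points
are at pairwise distances `> r`. -/
def packingNumber (M : Type*) [MetricSpace M] (r : ℝ) : ℕ :=
  sSup {k | ∃ S : Finset M, S.card = k ∧ ∀ x ∈ S, ∀ y ∈ S, x ≠ y → r < dist x y}

/-- The `r`-covering number of the subset `H`: the minimal number of open balls of radius
`r` needed to cover `H`. -/
def coveringNumber {G : Type*} [MetricSpace G] (H : Set G) (r : ℝ) : ℕ :=
  sInf {k | ∃ T : Finset G, T.card = k ∧ H ⊆ ⋃ g ∈ T, Metric.ball g r}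

/-- The (topological) support of a measure: the set of points all of whose open
neighbourhoods have positive measure. -/
def measureSupport {G : Type*} [TopologicalSpace G] [MeasurableSpace G] (α : Measure G) :
    Set G :=
  {g | ∀ U : Set G, IsOpen U → g ∈ U → 0 < α U}

theorem ae_mem_measureSupport {G : Type*} [TopologicalSpace G] [HereditarilyLindelofSpace G]
    [MeasurableSpace G] (α : Measure G) : ∀ᵐ g ∂α, g ∈ measureSupport α := by
  filter_upwards [Measure.support_mem_ae (μ := α)] with g hg U hU hgU
  exact (Measure.mem_support_iff_forall g).1 hg U (hU.mem_nhds hgU)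

theorem exists_card_eq_coveringNumber {G : Type*} [MetricSpace G] [CompactSpace G] (H : Set G)
    {r : ℝ} (hr : 0 < r) :
    ∃ T : Finset G, T.card = coveringNumber H r ∧ H ⊆ ⋃ g ∈ T, Metric.ball g r := by
  refine Nat.sInf_mem (s := {k | ∃ T : Finset G, T.card = k ∧ H ⊆ ⋃ g ∈ T, Metric.ball g r}) ?_
  obtain ⟨T, hT⟩ := isCompact_univ.elim_finite_subcover (fun g : G => Metric.ball g r)
    (fun _ => Metric.isOpen_ball) fun g _ => Set.mem_iUnion.2 ⟨g, Metric.mem_ball_self hr⟩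
  exact ⟨T.card, T, rfl, (Set.subset_univ H).trans hT⟩

/-- If `ν` is concentrated on `A` and `μ` is `ε`-close to `ν` in Wasserstein distance, then every
measurable set containing the open `3ε`-neighbourhood of `A` has `μ`-measure at least `1/2`. -/
theorem half_le_measure_of_wassersteinE_le {M : Type*} [MetricSpace M] [SecondCountableTopology M]
    [MeasurableSpace M] [BorelSpace M] {μ ν : Measure M} [IsProbabilityMeasure μ]
    {ε p : ℝ} (hε : 0 < ε) (hp : 1 ≤ p) (hW : wassersteinE edist p ν μ ≤ ENNReal.ofReal ε)
    {A B : Set M} (hA : ∀ᵐ y ∂ν, y ∈ A) (hB : MeasurableSet B)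
    (hAB : ∀ y ∈ A, ∀ z, dist y z < 3 * ε → z ∈ B) : 1 / 2 ≤ μ B := by
  have hp0 : 0 < p := one_pos.trans_le hp
  set c := ENNReal.ofReal (3 / 2 * ε) with hc
  have hc0 : c ≠ 0 := by simp [hc, hε]
  have hctop : c ≠ ∞ := ENNReal.ofReal_ne_top
  have h2c : ENNReal.ofReal (3 * ε) = 2 * c := by
    rw [hc, show 3 * ε = 2 * (3 / 2 * ε) by ring, ENNReal.ofReal_mul zero_le_two,
      ENNReal.ofReal_ofNat]
  have hlt : wassersteinE edist p ν μ < c :=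
    hW.trans_lt ((ENNReal.ofReal_lt_ofReal_iff (by positivity)).2 (by linarith))
  simp only [wassersteinE, iInf_lt_iff] at hlt
  obtain ⟨η, ⟨hfst, hsnd⟩, hη⟩ := hlt
  have hint : ∫⁻ z, edist z.1 z.2 ^ p ∂η ≤ c ^ p := by
    rw [one_div] at hη
    exact (ENNReal.rpow_inv_le_iff hp0).1 hη.le
  have hmarkov : η {z | (2 * c) ^ p ≤ edist z.1 z.2 ^ p} ≤ 1 / 2 := by
    refine (meas_ge_le_lintegral_div (by fun_prop) ?_ ?_).trans ?_
    · exact (ENNReal.rpow_pos (by simpa [pos_iff_ne_zero] using hc0) (by finiteness)).ne'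
    · finiteness
    · calc (∫⁻ z, edist z.1 z.2 ^ p ∂η) / (2 * c) ^ p
          ≤ c ^ p / (2 * c) ^ p := by gcongr
        _ = (1 / 2) ^ p := by
          rw [← ENNReal.div_rpow_of_nonneg _ _ hp0.le]
          congr 1
          simpa using ENNReal.mul_div_mul_right 1 2 hc0 hctop
        _ ≤ 1 / 2 := ENNReal.rpow_le_self_of_le_one (by simp) hp
  have hA' : ∀ᵐ z ∂η, z.1 ∈ A := ae_of_ae_map measurable_fst.aemeasurable (hfst ▸ hA)
  have hcompl : μ Bᶜ ≤ 1 / 2 := by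
    rw [← hsnd, Measure.map_apply measurable_snd hB.compl]
    refine (measure_mono_ae ?_).trans hmarkov
    filter_upwards [hA'] with z hz hzB
    refine ENNReal.rpow_le_rpow ?_ hp0.le
    rw [← h2c, edist_dist]
    exact ENNReal.ofReal_le_ofReal (not_lt.1 fun h => hzB (hAB _ hz _ h))
  have hsum : (1 / 2 : ℝ≥0∞) + 1 / 2 ≤ μ B + 1 / 2 := by
    calc (1 / 2 : ℝ≥0∞) + 1 / 2 = μ B + μ Bᶜ := by
          rw [ENNReal.add_halves, prob_add_prob_compl hB]
      _ ≤ μ B + 1 / 2 := by gcongr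
  exact (ENNReal.add_le_add_iff_right (by simp)).1 hsum

theorem lipschitzWith_smul_const {M G : Type*} [MetricSpace M] [MetricSpace G] [SMul G M]
    (hdom : ∀ (g h : G) (x : M), dist (g • x) (h • x) ≤ dist g h) (x : M) :
    LipschitzWith 1 fun g : G => g • x :=
  LipschitzWith.of_dist_le_mul fun g h => by simpa using hdom g h x

theorem measurable_map_smul {M G : Type*} [MetricSpace M] [SecondCountableTopology M]
    [MeasurableSpace M] [BorelSpace M] [MetricSpace G] [SecondCountableTopology G]
    [MeasurableSpace G] [BorelSpace G] [Group G] [MulAction G M]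
    (hiso : ∀ (g : G) (x y : M), dist (g • x) (g • y) = dist x y)
    (hdom : ∀ (g h : G) (x : M), dist (g • x) (h • x) ≤ dist g h)
    (α : Measure G) [SFinite α] : Measurable fun y : M => α.map fun g => g • y := by
  have hcont : Continuous fun q : G × M => q.1 • q.2 :=
    continuous_prod_of_continuous_lipschitzWith (fun q : G × M => q.1 • q.2) 1
      (fun g => (Isometry.of_dist_eq (hiso g)).continuous) (lipschitzWith_smul_const hdom)
  refine Measure.measurable_of_measurable_coe _ fun s hs => ?_
  have hmap (y : M) : (α.map fun g => g • y) s = α ((fun g => (g, y)) ⁻¹'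
      ((fun q : G × M => q.1 • q.2) ⁻¹' s)) := by
    rw [Measure.map_apply (lipschitzWith_smul_const hdom y).continuous.measurable hs]
    rfl
  simp_rw [hmap]
  exact measurable_measure_prodMk_right (hcont.measurable hs)

open scoped Pointwise in
/-- After `t` steps the walk started at `x` is within `t * r` of some `w • x`, with `w` a word of
length `t` in the centres of an `r`-cover of the support of the step distribution. -/
theorem ae_kernelIterate_exists_dist_le {M G : Type*} [MetricSpace M] [SecondCountableTopology M]
    [MeasurableSpace M] [BorelSpace M] [MetricSpace G] [SecondCountableTopology G]
    [MeasurableSpace G] [BorelSpace G] [Group G] [MulAction G M] [DecidableEq G]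
    (hiso : ∀ (g : G) (x y : M), dist (g • x) (g • y) = dist x y)
    (hdom : ∀ (g h : G) (x : M), dist (g • x) (h • x) ≤ dist g h)
    (α : Measure G) [SFinite α] {r : ℝ} {T : Finset G}
    (hT : measureSupport α ⊆ ⋃ g ∈ T, Metric.ball g r) (x : M) (t : ℕ) :
    ∀ᵐ y ∂kernelIterate (fun y => α.map fun g => g • y) t (Measure.dirac x),
      y ∈ ⋃ w ∈ T ^ t, Metric.closedBall (w • x) (t * r) := by
  have hmeas (t : ℕ) : MeasurableSet (⋃ w ∈ T ^ t, Metric.closedBall (w • x) (t * r)) :=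
    (T ^ t).measurableSet_biUnion fun _ _ => measurableSet_closedBall
  have hker := measurable_map_smul (M := M) hiso hdom α
  induction t with
  | zero =>
    have hx : x ∈ ⋃ w ∈ T ^ 0, Metric.closedBall (w • x) ((0 : ℕ) * r) := by simp
    exact (ae_dirac_iff (hmeas 0)).2 hx
  | succ t ih =>
    rw [kernelIterate, ae_iff, ← Set.compl_def,
      Measure.bind_apply (hmeas _).compl hker.aemeasurable,
      lintegral_eq_zero_iff (Measure.measurable_measure.1 hker _ (hmeas _).compl)]
    filter_upwards [ih] with y hy
    change (α.map fun g => g • y) _ = 0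
    rw [Measure.map_apply (lipschitzWith_smul_const hdom y).continuous.measurable
      (hmeas _).compl, Set.preimage_compl, ← mem_ae_iff]
    filter_upwards [ae_mem_measureSupport α] with g hg
    simp only [Set.mem_preimage, Set.mem_iUnion, exists_prop, Metric.mem_closedBall] at hy ⊢
    obtain ⟨w, hw, hyw⟩ := hy
    obtain ⟨h, hh, hgh⟩ := Set.mem_iUnion₂.1 (hT hg)
    refine ⟨h * w, pow_succ' T t ▸ Finset.mul_mem_mul hh hw, ?_⟩
    calc dist (g • y) ((h * w) • x)
        ≤ dist (g • y) (h • y) + dist (h • y) ((h * w) • x) := dist_triangle _ _ _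
      _ = dist (g • y) (h • y) + dist y (w • x) := by rw [mul_smul, hiso]
      _ ≤ r + t * r := add_le_add ((hdom g h y).trans (Metric.mem_ball.1 hgh).le) hyw
      _ = ((t + 1 : ℕ) : ℝ) * r := by push_cast; ring

open scoped Pointwise in
/-- An `8ε`-separated set has at most `2 |T| ^ τ` points: the balls of radius `4ε` about the
translates of its points by a fixed word are disjoint, while those about the translates of a
fixed point by all words of length `τ` carry at least half of the mass of `μstar`. -/
theorem card_le_two_mul_card_pow {M G : Type*} [MetricSpace M] [SecondCountableTopology M]
    [MeasurableSpace M] [BorelSpace M] [MetricSpace G] [SecondCountableTopology G]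
    [MeasurableSpace G] [BorelSpace G] [Group G] [MulAction G M]
    (hiso : ∀ (g : G) (x y : M), dist (g • x) (g • y) = dist x y)
    (hdom : ∀ (g h : G) (x : M), dist (g • x) (h • x) ≤ dist g h)
    {α : Measure G} [SFinite α] {μstar : Measure M} [IsProbabilityMeasure μstar]
    {τ : ℕ} (hτ : 1 ≤ τ) {ε : ℝ} (hε : 0 < ε) {p : ℝ} (hp : 1 ≤ p)
    (hmix : ∀ x : M,
      wassersteinE edist p
        (kernelIterate (fun y => α.map fun g => g • y) τ (Measure.dirac x)) μstar ≤
        ENNReal.ofReal ε)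
    {T : Finset G} (hT : measureSupport α ⊆ ⋃ g ∈ T, Metric.ball g (ε / (τ : ℝ)))
    {S : Finset M} (hS : ∀ x ∈ S, ∀ y ∈ S, x ≠ y → 8 * ε < dist x y) :
    S.card ≤ 2 * T.card ^ τ := by
  classical
  have hτε : (τ : ℝ) * (ε / τ) = ε := mul_div_cancel₀ _ (by positivity)
  have hhalf (x : M) : 1 / 2 ≤ ∑ w ∈ T ^ τ, μstar (Metric.ball (w • x) (4 * ε)) := by
    refine le_trans ?_ (measure_biUnion_finset_le (T ^ τ) fun w => Metric.ball (w • x) (4 * ε))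
    refine half_le_measure_of_wassersteinE_le hε hp (hmix x)
      (ae_kernelIterate_exists_dist_le hiso hdom α hT x τ)
      ((T ^ τ).measurableSet_biUnion fun _ _ => measurableSet_ball) fun y hy z hyz => ?_
    simp only [Set.mem_iUnion, exists_prop, Metric.mem_closedBall, Metric.mem_ball, hτε] at hy ⊢
    obtain ⟨w, hw, hyw⟩ := hy
    refine ⟨w, hw, ?_⟩
    linarith [dist_triangle_left z (w • x) y]
  have hdisj (w : G) : ∑ x ∈ S, μstar (Metric.ball (w • x) (4 * ε)) ≤ 1 := by
    rw [← measure_univ (μ := μstar)]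
    refine sum_measure_le_measure_univ (fun _ _ => measurableSet_ball.nullMeasurableSet)
      fun x hx y hy hxy => (Metric.ball_disjoint_ball ?_).aedisjoint
    rw [hiso]
    linarith [hS x hx y hy hxy]
  have hcard : (S.card : ℝ≥0∞) * (1 / 2) ≤ (T.card : ℝ≥0∞) ^ τ := by
    calc (S.card : ℝ≥0∞) * (1 / 2)
        = ∑ _x ∈ S, (1 / 2 : ℝ≥0∞) := by rw [Finset.sum_const, nsmul_eq_mul]
      _ ≤ ∑ x ∈ S, ∑ w ∈ T ^ τ, μstar (Metric.ball (w • x) (4 * ε)) :=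
        Finset.sum_le_sum fun x _ => hhalf x
      _ = ∑ w ∈ T ^ τ, ∑ x ∈ S, μstar (Metric.ball (w • x) (4 * ε)) := Finset.sum_comm
      _ ≤ ∑ _w ∈ T ^ τ, 1 := Finset.sum_le_sum fun w _ => hdisj w
      _ = ((T ^ τ).card : ℝ≥0∞) := by simp
      _ ≤ (T.card : ℝ≥0∞) ^ τ := by exact_mod_cast Finset.card_pow_le
  rw [mul_one_div, ENNReal.div_le_iff two_ne_zero ofNat_ne_top, mul_comm] at hcard
  exact_mod_cast hcard

/-- **Theorem 6.** Let a compact metric group `(G,d̃)` act isometrically on a compact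
metric space `(M,d)` with `d̃(g,h) ≥ d(gx,hx)` for all `x`, let `α` be a probability
measure on `G` with support `H`, and let `P` be the induced kernel `P_x = law of h·x`,
`h ∼ α`.  If `W_{d,p}(P_x^τ, μ⋆) ≤ ε` for every `x ∈ M`, then
`τ · ln C̃_H(ε/τ) ≥ ln N_M(8ε) - ln 2`. -/
theorem group_action_walk_lower_bound
    {M G : Type*} [MetricSpace M] [CompactSpace M] [MeasurableSpace M] [BorelSpace M]
    [MetricSpace G] [CompactSpace G] [MeasurableSpace G] [BorelSpace G]
    [Group G] [MulAction G M]
    (hiso : ∀ (g : G) (x y : M), dist (g • x) (g • y) = dist x y)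
    (hdom : ∀ (g h : G) (x : M), dist (g • x) (h • x) ≤ dist g h)
    (α : Measure G) (hα : IsProbabilityMeasure α)
    (μstar : Measure M) (hμstar : IsProbabilityMeasure μstar)
    (τ : ℕ) (hτ : 1 ≤ τ) (ε : ℝ) (hε : 0 < ε) (p : ℝ) (hp : 1 ≤ p)
    (hmix : ∀ x : M,
      wassersteinE edist p
        (kernelIterate (fun y => α.map fun g => g • y) τ (Measure.dirac x)) μstar ≤
        ENNReal.ofReal ε) :
    Real.log (packingNumber M (8 * ε)) - Real.log 2 ≤
      (τ : ℝ) * Real.log (coveringNumber (measureSupport α) (ε / (τ : ℝ))) := by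
  have hbound : packingNumber M (8 * ε) ≤
      2 * coveringNumber (measureSupport α) (ε / (τ : ℝ)) ^ τ := by
    obtain ⟨T, hTcard, hT⟩ :=
      exists_card_eq_coveringNumber (measureSupport α) (div_pos hε (by positivity : (0 : ℝ) < τ))
    rw [← hTcard]
    refine csSup_le' ?_
    rintro k ⟨S, rfl, hS⟩
    exact card_le_two_mul_card_pow hiso hdom hτ hε hp hmix hT hS
  rcases Nat.eq_zero_or_pos (packingNumber M (8 * ε)) with h0 | hpos
  · have hlog : 0 ≤ (τ : ℝ) * Real.log (coveringNumber (measureSupport α) (ε / (τ : ℝ))) :=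
      mul_nonneg τ.cast_nonneg (Real.log_natCast_nonneg _)
    rw [h0, Nat.cast_zero, Real.log_zero]
    linarith [Real.log_nonneg one_le_two]
  · have hpow : coveringNumber (measureSupport α) (ε / (τ : ℝ)) ^ τ ≠ 0 := by
      intro h
      rw [h] at hbound
      lia
    have hle : Real.log (packingNumber M (8 * ε)) ≤
        Real.log (2 * (coveringNumber (measureSupport α) (ε / (τ : ℝ)) : ℝ) ^ τ) :=
      Real.log_le_log (by exact_mod_cast hpos) (by exact_mod_cast hbound)
    rw [Real.log_mul two_ne_zero (by exact_mod_cast hpow), Real.log_pow] at hle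
    linarith

end
end

section
/- There exist constants φ, ψ > 0 such that for every integer n ≥ 10 and every real r with 0 < r < √n/10, the Haar probability measure H on SO(n) satisfies H({x ∈ SO(n) : ‖x − id‖_hs < r}) ≤ (e^φ · r/√n)^{ψ n²}. -/
open MeasureTheory ENNReal Filter Topology Matrix

noncomputable section

/-- The special orthogonal group `SO(n)`, as a subset of the `n × n` real matrices. -/
def SO (n : ℕ) : Set (Matrix (Fin n) (Fin n) ℝ) :=
  {a | a * aᵀ = 1 ∧ a.det = 1}

/-- The Hilbert–Schmidt (Frobenius) distance `‖a - b‖_hs = √(Tr((a-b)ᵀ(a-b)))` between real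
matrices, as an `ℝ≥0∞`-valued distance function. -/
def hsDist {n : ℕ} (a b : Matrix (Fin n) (Fin n) ℝ) : ℝ≥0∞ :=
  ENNReal.ofReal (Real.sqrt (Matrix.trace ((a - b)ᵀ * (a - b))))

/-- The intrinsic (Riemannian/length) metric `D` on `SO(n)` induced by the Hilbert–Schmidt
norm: the infimum of `hs`-lengths of continuous paths inside `SO(n)`. -/
def DSO (n : ℕ) (a b : Matrix (Fin n) (Fin n) ℝ) : ℝ≥0∞ :=
  intrinsicDistE hsDist (SO n) a b

/-- A maximal `ε`-separated subset of the unit ball has at least `ε ^ (-dim)` points. -/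
theorem exists_separated_finset_ball {E : Type*} [NormedAddCommGroup E] [NormedSpace ℝ E]
    [FiniteDimensional ℝ E] {ε : ℝ} (hε : 0 < ε) :
    ∃ t : Finset E, (∀ x ∈ t, ‖x‖ < 1) ∧ (∀ x ∈ t, ∀ y ∈ t, x ≠ y → ε ≤ dist x y) ∧
      1 ≤ (t.card : ℝ) * ε ^ Module.finrank ℝ E := by
  classical
  borelize E
  by_contra! h
  let cards : Set ℕ := {k | ∃ t : Finset E, (∀ x ∈ t, ‖x‖ < 1) ∧
    (∀ x ∈ t, ∀ y ∈ t, x ≠ y → ε ≤ dist x y) ∧ t.card = k}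
  have hpow : 0 < ε ^ Module.finrank ℝ E := by positivity
  have hbdd : BddAbove cards := by
    refine ⟨⌈(ε ^ Module.finrank ℝ E)⁻¹⌉₊, ?_⟩
    rintro k ⟨t, hball, hsep, rfl⟩
    have hlt : (t.card : ℝ) < (ε ^ Module.finrank ℝ E)⁻¹ := by
      rw [← one_div, lt_div_iff₀ hpow]
      exact h t hball hsep
    exact_mod_cast (hlt.le.trans (Nat.le_ceil _))
  obtain ⟨t, hball, hsep, hcard⟩ := Nat.sSup_mem (s := cards) ⟨0, ∅, by simp⟩ hbdd
  have hcover : Metric.ball (0 : E) 1 ⊆ ⋃ x ∈ t, Metric.ball x ε := by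
    intro z hz
    by_contra hzt
    simp only [Set.mem_iUnion, Metric.mem_ball, not_exists, not_lt] at hzt
    have hzmem : z ∉ t := fun hmem => by
      have := hzt z hmem
      rw [dist_self] at this
      linarith
    have hmem : t.card + 1 ∈ cards := by
      refine ⟨insert z t, ?_, ?_, Finset.card_insert_of_notMem hzmem⟩
      · intro x hx
        rcases Finset.mem_insert.1 hx with rfl | hx
        · simpa using hz
        · exact hball x hx
      · intro x hx y hy hxy
        rcases Finset.mem_insert.1 hx with hxz | hxt <;>
          rcases Finset.mem_insert.1 hy with hyz | hyt
        · exact absurd (hxz.trans hyz.symm) hxy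
        · exact hxz ▸ hzt y hyt
        · rw [dist_comm]
          exact hyz ▸ hzt x hxt
        · exact hsep x hxt y hyt hxy
    have := le_csSup hbdd hmem
    omega
  have hvol : (Measure.addHaar : Measure E) (Metric.ball 0 1) ≤
      ENNReal.ofReal (t.card * ε ^ Module.finrank ℝ E) *
        (Measure.addHaar : Measure E) (Metric.ball 0 1) := by
    calc (Measure.addHaar : Measure E) (Metric.ball 0 1)
        ≤ ∑ x ∈ t, (Measure.addHaar : Measure E) (Metric.ball x ε) :=
          (measure_mono hcover).trans (measure_biUnion_finset_le _ _)
      _ = _ := by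
          simp_rw [Measure.addHaar_ball_of_pos _ _ hε]
          rw [Finset.sum_const, nsmul_eq_mul, ENNReal.ofReal_mul (by positivity),
            ENNReal.ofReal_natCast, mul_assoc]
  have hpos : (Measure.addHaar : Measure E) (Metric.ball 0 1) ≠ 0 :=
    (Metric.measure_ball_pos _ _ one_pos).ne'
  have hlt : ENNReal.ofReal (t.card * ε ^ Module.finrank ℝ E) < 1 := by
    rw [ENNReal.ofReal_lt_one]
    exact h t hball hsep
  have := ENNReal.mul_lt_mul_left hpos measure_ball_lt_top.ne hlt
  rw [one_mul] at this
  exact absurd hvol (not_le.2 this)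

/-- The Householder reflection in the hyperplane orthogonal to `w`. -/
def householder {n : ℕ} (w : Fin n → ℝ) : Matrix (Fin n) (Fin n) ℝ :=
  1 - (2 / (w ⬝ᵥ w)) • vecMulVec w w

theorem householder_mulVec {n : ℕ} (w z : Fin n → ℝ) :
    householder w *ᵥ z = z - (2 * (w ⬝ᵥ z) / (w ⬝ᵥ w)) • w := by
  ext i
  simp [householder, sub_mulVec, smul_mulVec, vecMulVec_mulVec]
  ring

theorem householder_mul_transpose {n : ℕ} {w : Fin n → ℝ} (hw : w ⬝ᵥ w ≠ 0) :
    householder w * (householder w)ᵀ = 1 := by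
  have hsymm : (householder w)ᵀ = householder w := by
    simp [householder, transpose_vecMulVec]
  rw [hsymm, householder]
  ext i j
  simp only [sub_mul, mul_sub, one_mul, mul_one, smul_mul_smul_comm, vecMulVec_mul_vecMulVec,
    Matrix.sub_apply, Matrix.smul_apply, vecMulVec_apply, Pi.smul_apply, smul_eq_mul]
  field_simp
  ring

theorem det_householder {n : ℕ} {w : Fin n → ℝ} (hw : w ⬝ᵥ w ≠ 0) :
    (householder w).det = -1 := by
  have hform : householder w = 1 + replicateCol Unit (-(2 / (w ⬝ᵥ w)) • w) *
      replicateRow Unit w := by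
    rw [← vecMulVec_eq, smul_vecMulVec, neg_smul, ← sub_eq_add_neg]
    rfl
  rw [hform, det_one_add_replicateCol_mul_replicateRow, dotProduct_smul, smul_eq_mul]
  field_simp
  norm_num

/-- A rotation in the plane of two non-opposite unit vectors carries one to the other. -/
theorem exists_rotation {n : ℕ} {u v : Fin n → ℝ} (hu : u ⬝ᵥ u = 1) (hv : v ⬝ᵥ v = 1)
    (huv : 0 < 1 + u ⬝ᵥ v) :
    ∃ g ∈ SO n, g *ᵥ u = v ∧ ∀ z, u ⬝ᵥ z = 0 → v ⬝ᵥ z = 0 → g *ᵥ z = z := by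
  have hw : (u + v) ⬝ᵥ (u + v) = 2 * (1 + u ⬝ᵥ v) := by
    rw [add_dotProduct, dotProduct_add, dotProduct_add, hu, hv, dotProduct_comm v u]
    ring
  have hw0 : (u + v) ⬝ᵥ (u + v) ≠ 0 := by
    rw [hw]
    positivity
  have hu0 : u ⬝ᵥ u ≠ 0 := by
    rw [hu]
    exact one_ne_zero
  refine ⟨householder (u + v) * householder u, ⟨?_, ?_⟩, ?_, ?_⟩
  · rw [transpose_mul, Matrix.mul_assoc, ← Matrix.mul_assoc (householder u),
      householder_mul_transpose hu0, Matrix.one_mul, householder_mul_transpose hw0]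
  · rw [det_mul, det_householder hw0, det_householder hu0]
    norm_num
  · have hneg : householder u *ᵥ u = -u := by
      rw [householder_mulVec, hu]
      ext i
      simp
      ring
    rw [← mulVec_mulVec, hneg, householder_mulVec, dotProduct_neg, hw, add_dotProduct, hu,
      dotProduct_comm v u]
    have : 2 * -(1 + u ⬝ᵥ v) / (2 * (1 + u ⬝ᵥ v)) = -1 := by
      field_simp
    rw [this]
    ext i
    simp
  · intro z huz hvz
    rw [← mulVec_mulVec, householder_mulVec u, huz, householder_mulVec]
    simp [add_dotProduct, huz, hvz]

/-- The matrices whose columns indexed by `I` lie within `δ` of those of the identity. -/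
def columnsNear {n : ℕ} (δ : ℝ) (I : Finset (Fin n)) : Set (Matrix (Fin n) (Fin n) ℝ) :=
  {x | ∀ j ∈ I, ∑ l, (x l j - (1 : Matrix (Fin n) (Fin n) ℝ) l j) ^ 2 < δ ^ 2}

theorem measurable_matrix_entry {n : ℕ} (i j : Fin n) :
    Measurable (fun x : Matrix (Fin n) (Fin n) ℝ => x i j) :=
  (measurable_pi_apply j).comp (measurable_pi_apply (X := fun _ : Fin n => Fin n → ℝ) i)

theorem measurable_matrix_mul_left {n : ℕ} (a : Matrix (Fin n) (Fin n) ℝ) :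
    Measurable (fun x : Matrix (Fin n) (Fin n) ℝ => a * x) := by
  refine measurable_pi_iff.2 fun i => measurable_pi_iff.2 fun j => ?_
  simp only [mul_apply]
  exact Finset.measurable_fun_sum _ fun l _ => (measurable_matrix_entry l j).const_mul _

theorem measurableSet_columnsNear {n : ℕ} (δ : ℝ) (I : Finset (Fin n)) :
    MeasurableSet (columnsNear δ I) := by
  have hset : columnsNear δ I = ⋂ j ∈ I, {x : Matrix (Fin n) (Fin n) ℝ |
      ∑ l, (x l j - (1 : Matrix (Fin n) (Fin n) ℝ) l j) ^ 2 < δ ^ 2} := by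
    ext x
    simp [columnsNear]
  rw [hset]
  refine Finset.measurableSet_biInter _ fun j _ => measurableSet_lt ?_ measurable_const
  exact Finset.measurable_fun_sum _ fun l _ =>
    ((measurable_matrix_entry l j).sub_const _).pow_const _

/-- Multiplying by the inverse of an orthogonal matrix preserves distances between columns. -/
theorem sum_sq_transpose_mul_sub_one {n : ℕ} {g : Matrix (Fin n) (Fin n) ℝ} (hg : g * gᵀ = 1)
    (y : Matrix (Fin n) (Fin n) ℝ) (j : Fin n) :
    ∑ l, ((gᵀ * y) l j - (1 : Matrix (Fin n) (Fin n) ℝ) l j) ^ 2 = ∑ l, (y l j - g l j) ^ 2 := by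
  have hdiag : ∀ a : Matrix (Fin n) (Fin n) ℝ, ∑ l, a l j ^ 2 = (aᵀ * a) j j := fun a => by
    simp [mul_apply, pow_two]
  have hfactor : gᵀ * y - 1 = gᵀ * (y - g) := by
    rw [Matrix.mul_sub, mul_eq_one_comm.1 hg]
  have := hdiag (gᵀ * y - 1)
  rw [hfactor, transpose_mul, transpose_transpose, Matrix.mul_assoc, ← Matrix.mul_assoc g, hg,
    Matrix.one_mul, ← hdiag, ← hfactor] at this
  simpa only [Matrix.sub_apply] using this

theorem transpose_mem_SO {n : ℕ} {g : Matrix (Fin n) (Fin n) ℝ} (hg : g ∈ SO n) : gᵀ ∈ SO n := by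
  refine ⟨?_, by rw [det_transpose, hg.2]⟩
  rw [transpose_transpose]
  exact mul_eq_one_comm.1 hg.1

/-- The point of the upper unit hemisphere (around the `i`-th axis) above `x`. -/
def hemisphereLift {n : ℕ} (i : Fin n) (J : Finset (Fin n)) (x : EuclideanSpace ℝ J) :
    Fin n → ℝ :=
  fun l => if h : l ∈ J then x ⟨l, h⟩ else if l = i then √(1 - ‖x‖ ^ 2) else 0

theorem sum_eq_sum_coe_add {n : ℕ} {i : Fin n} {J : Finset (Fin n)} (hi : i ∉ J)
    {f : Fin n → ℝ} (hf : ∀ l, l ∉ J → l ≠ i → f l = 0) :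
    ∑ l, f l = ∑ l : J, f l + f i := by
  rw [Finset.sum_coe_sort J f, add_comm, ← Finset.sum_insert hi]
  refine (Finset.sum_subset (Finset.subset_univ _) fun l _ hl => ?_).symm
  rw [Finset.mem_insert, not_or] at hl
  exact hf l hl.2 hl.1

theorem hemisphereLift_dotProduct_self {n : ℕ} {i : Fin n} {J : Finset (Fin n)} (hi : i ∉ J)
    {x : EuclideanSpace ℝ J} (hx : ‖x‖ < 1) :
    hemisphereLift i J x ⬝ᵥ hemisphereLift i J x = 1 := by
  have hx2 : 0 ≤ 1 - ‖x‖ ^ 2 := by nlinarith [norm_nonneg x]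
  rw [dotProduct, sum_eq_sum_coe_add hi]
  · have hnorm := EuclideanSpace.real_norm_sq_eq x
    rw [Finset.univ_eq_attach] at hnorm
    simp [hemisphereLift, hi, Real.mul_self_sqrt hx2, ← pow_two, ← hnorm]
  · intro l hl hli
    simp [hemisphereLift, hl, hli]

theorem dist_sq_le_hemisphereLift {n : ℕ} {i : Fin n} {J : Finset (Fin n)} (hi : i ∉ J)
    (x y : EuclideanSpace ℝ J) :
    dist x y ^ 2 ≤ ∑ l, (hemisphereLift i J x l - hemisphereLift i J y l) ^ 2 := by
  rw [sum_eq_sum_coe_add hi, dist_eq_norm, EuclideanSpace.real_norm_sq_eq]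
  · have := sq_nonneg (hemisphereLift i J x i - hemisphereLift i J y i)
    simpa [hemisphereLift] using this
  · intro l hl hli
    simp [hemisphereLift, hl, hli]

/-- Constraining one more column costs a factor given by the dimension of the sphere
in which that column may still move. -/
theorem measure_columnsNear_insert_le {n : ℕ} {μ : Measure (Matrix (Fin n) (Fin n) ℝ)}
    (hμ : ∀ a ∈ SO n, μ.map (fun x => a * x) = μ) {δ : ℝ} (hδ : 0 < δ)
    {I : Finset (Fin n)} {i : Fin n} (hi : i ∉ I) :
    μ (columnsNear δ (insert i I)) ≤
      ENNReal.ofReal ((2 * δ) ^ (n - (I.card + 1))) * μ (columnsNear δ I) := by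
  classical
  set J : Finset (Fin n) := (insert i I)ᶜ with hJ
  have hiJ : i ∉ J := by simp [hJ]
  obtain ⟨t, hball, hsep, hcard⟩ :=
    exists_separated_finset_ball (E := EuclideanSpace ℝ J) (ε := 2 * δ) (by positivity)
  have hdim : Module.finrank ℝ (EuclideanSpace ℝ J) = n - (I.card + 1) := by
    rw [finrank_euclideanSpace, Fintype.card_coe, hJ, Finset.card_compl,
      Finset.card_insert_of_notMem hi, Fintype.card_fin]
  rw [hdim] at hcard
  have hrot : ∀ x ∈ t, ∃ g ∈ SO n, (∀ l, g l i = hemisphereLift i J x l) ∧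
      ∀ j ∈ I, ∀ l, g l j = (1 : Matrix (Fin n) (Fin n) ℝ) l j := by
    intro x hx
    have hdot : Pi.single i 1 ⬝ᵥ hemisphereLift i J x = √(1 - ‖x‖ ^ 2) := by
      simp [hemisphereLift, hiJ]
    obtain ⟨g, hg, hgi, hgz⟩ := exists_rotation (u := Pi.single i 1) (v := hemisphereLift i J x)
      (by simp) (hemisphereLift_dotProduct_self hiJ (hball x hx)) (by rw [hdot]; positivity)
    refine ⟨g, hg, fun l => ?_, fun j hj l => ?_⟩
    · simpa using congrFun hgi l
    · have hji : j ≠ i := fun h => hi (h ▸ hj)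
      have hjJ : j ∉ J := by simp [hJ, hj]
      have := congrFun (hgz (Pi.single j 1) (by simp [hji])
        (by simp [hemisphereLift, hjJ, hji])) l
      simpa [Pi.single_apply, one_apply] using this
  choose! g hgSO hgi hgI using hrot
  let A : EuclideanSpace ℝ J → Set (Matrix (Fin n) (Fin n) ℝ) :=
    fun x => (fun y => (g x)ᵀ * y) ⁻¹' columnsNear δ (insert i I)
  have hAmeas : ∀ x, MeasurableSet (A x) := fun x =>
    measurable_matrix_mul_left _ (measurableSet_columnsNear _ _)
  have hAμ : ∀ x ∈ t, μ (A x) = μ (columnsNear δ (insert i I)) := fun x hx => by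
    rw [← Measure.map_apply (measurable_matrix_mul_left _) (measurableSet_columnsNear _ _),
      hμ _ (transpose_mem_SO (hgSO x hx))]
  have hAnear : ∀ x ∈ t, ∀ y ∈ A x, ∀ j ∈ insert i I, ∑ l, (y l j - g x l j) ^ 2 < δ ^ 2 := by
    intro x hx y hy j hj
    rw [← sum_sq_transpose_mul_sub_one (hgSO x hx).1]
    exact hy j hj
  have hAsub : (⋃ x ∈ t, A x) ⊆ columnsNear δ I := by
    refine Set.iUnion₂_subset fun x hx y hy j hj => ?_
    have := hAnear x hx y hy j (Finset.mem_insert_of_mem hj)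
    simpa only [hgI x hx j hj] using this
  have hAdisj : (t : Set (EuclideanSpace ℝ J)).PairwiseDisjoint A := by
    intro x hx x' hx' hne
    refine Set.disjoint_left.2 fun y hy hy' => ?_
    have h₁ := hAnear x hx y hy i (Finset.mem_insert_self _ _)
    have h₂ := hAnear x' hx' y hy' i (Finset.mem_insert_self _ _)
    simp only [hgi x hx, hgi x' hx'] at h₁ h₂
    have h₃ := dist_sq_le_hemisphereLift hiJ x x'
    have h₄ : ∑ l, (hemisphereLift i J x l - hemisphereLift i J x' l) ^ 2 ≤
        2 * ∑ l, (y l i - hemisphereLift i J x l) ^ 2 +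
          2 * ∑ l, (y l i - hemisphereLift i J x' l) ^ 2 := by
      rw [Finset.mul_sum, Finset.mul_sum, ← Finset.sum_add_distrib]
      refine Finset.sum_le_sum fun l _ => ?_
      nlinarith [sq_nonneg (y l i - hemisphereLift i J x l + (y l i - hemisphereLift i J x' l))]
    have h₅ : (2 * δ) ^ 2 ≤ dist x x' ^ 2 :=
      pow_le_pow_left₀ (by positivity) (hsep x hx x' hx' hne) 2
    nlinarith
  have hpack : (t.card : ℝ≥0∞) * μ (columnsNear δ (insert i I)) ≤ μ (columnsNear δ I) := by
    calc (t.card : ℝ≥0∞) * μ (columnsNear δ (insert i I)) = ∑ x ∈ t, μ (A x) := by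
          rw [Finset.sum_congr rfl hAμ, Finset.sum_const, nsmul_eq_mul]
      _ = μ (⋃ x ∈ t, A x) := (measure_biUnion_finset hAdisj fun x _ => hAmeas x).symm
      _ ≤ _ := measure_mono hAsub
  calc μ (columnsNear δ (insert i I))
      ≤ ENNReal.ofReal (t.card * (2 * δ) ^ (n - (I.card + 1))) *
          μ (columnsNear δ (insert i I)) :=
        le_mul_of_one_le_left' (ENNReal.one_le_ofReal.2 hcard)
    _ = ENNReal.ofReal ((2 * δ) ^ (n - (I.card + 1))) *
          (t.card * μ (columnsNear δ (insert i I))) := by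
        rw [mul_comm (t.card : ℝ), ENNReal.ofReal_mul (by positivity), ENNReal.ofReal_natCast,
          mul_assoc]
    _ ≤ _ := by gcongr

theorem measure_columnsNear_le {n k : ℕ} (hk : 2 * k ≤ n)
    {μ : Measure (Matrix (Fin n) (Fin n) ℝ)} [IsProbabilityMeasure μ]
    (hμ : ∀ a ∈ SO n, μ.map (fun x => a * x) = μ) {δ : ℝ} (hδ : 0 < δ) (hδ1 : 2 * δ ≤ 1)
    (I : Finset (Fin n)) (hI : I.card ≤ k) :
    μ (columnsNear δ I) ≤ ENNReal.ofReal ((2 * δ) ^ (k * I.card)) := by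
  classical
  induction I using Finset.induction_on with
  | empty => simpa using prob_le_one
  | insert i I hi ih =>
    rw [Finset.card_insert_of_notMem hi] at hI ⊢
    calc μ (columnsNear δ (insert i I))
        ≤ ENNReal.ofReal ((2 * δ) ^ (n - (I.card + 1))) * μ (columnsNear δ I) :=
          measure_columnsNear_insert_le hμ hδ hi
      _ ≤ ENNReal.ofReal ((2 * δ) ^ k) * ENNReal.ofReal ((2 * δ) ^ (k * I.card)) := by
          gcongr ENNReal.ofReal ?_ * ?_
          · exact pow_le_pow_of_le_one (by positivity) hδ1 (by omega)
          · exact ih (by omega)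
      _ = ENNReal.ofReal ((2 * δ) ^ (k * (I.card + 1))) := by
          rw [← ENNReal.ofReal_mul (by positivity), ← pow_add]
          ring_nf

/-- A matrix close to the identity has at least half of its columns close to those of the
identity. -/
theorem exists_columnsNear {n k : ℕ} (hk : 2 * k ≤ n) (hn : 0 < n) {r δ : ℝ}
    (hr : 0 < r) (hδ : δ ^ 2 = 2 * r ^ 2 / n) {x : Matrix (Fin n) (Fin n) ℝ}
    (hx : √(trace ((x - 1)ᵀ * (x - 1))) < r) :
    ∃ I ∈ Finset.powersetCard k (Finset.univ : Finset (Fin n)), x ∈ columnsNear δ I := by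
  classical
  let dev : Fin n → ℝ := fun j => ∑ l, (x l j - (1 : Matrix (Fin n) (Fin n) ℝ) l j) ^ 2
  have hdev : ∀ j, 0 ≤ dev j := fun j => Finset.sum_nonneg fun l _ => sq_nonneg _
  have htrace : trace ((x - 1)ᵀ * (x - 1)) = ∑ j, dev j := by
    simp only [trace, diag_apply, mul_apply, transpose_apply, Matrix.sub_apply, dev, pow_two]
  have hsum : ∑ j, dev j < r ^ 2 := by
    rw [← htrace]
    exact (Real.sqrt_lt' hr).1 hx
  let good : Finset (Fin n) := Finset.univ.filter fun j => dev j < δ ^ 2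
  have hnR : (0 : ℝ) < n := by exact_mod_cast hn
  have hbad : (goodᶜ.card : ℝ) * δ ^ 2 ≤ ∑ j, dev j := by
    calc (goodᶜ.card : ℝ) * δ ^ 2 = ∑ _j ∈ goodᶜ, δ ^ 2 := by simp
      _ ≤ ∑ j ∈ goodᶜ, dev j := Finset.sum_le_sum fun j hj => by simpa [good] using hj
      _ ≤ ∑ j, dev j := Finset.sum_le_sum_of_subset_of_nonneg (Finset.subset_univ _)
          fun j _ _ => hdev j
  have hbad' : (2 : ℝ) * goodᶜ.card < n := by
    have hlt := hbad.trans_lt hsum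
    rw [hδ, mul_div_assoc', div_lt_iff₀ hnR] at hlt
    have hr2 : 0 < r ^ 2 := by positivity
    nlinarith
  have hbadN : 2 * goodᶜ.card < n := by exact_mod_cast hbad'
  have hcompl := Finset.card_add_card_compl good
  rw [Fintype.card_fin] at hcompl
  obtain ⟨I, hI, hIcard⟩ := Finset.exists_subset_card_eq (s := good) (n := k) (by omega)
  refine ⟨I, Finset.mem_powersetCard.2 ⟨Finset.subset_univ _, hIcard⟩, fun j hj => ?_⟩
  exact (Finset.mem_filter.1 (hI hj)).2

theorem measure_ball_le {n k : ℕ} (hk : 2 * k ≤ n) (hn : 0 < n)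
    {μ : Measure (Matrix (Fin n) (Fin n) ℝ)} [IsProbabilityMeasure μ]
    (hμ : ∀ a ∈ SO n, μ.map (fun x => a * x) = μ) {r : ℝ} (hr : 0 < r) (hrn : r < √n / 10) :
    μ {x | √(trace ((x - 1)ᵀ * (x - 1))) < r} ≤
      ENNReal.ofReal (2 ^ n * (2 * √2 * (r / √n)) ^ k ^ 2) := by
  have hnR : (0 : ℝ) < n := by exact_mod_cast hn
  have hsn : 0 < √(n : ℝ) := Real.sqrt_pos.2 hnR
  set δ : ℝ := √2 * (r / √n) with hδdef
  have hδ : 0 < δ := by positivity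
  have hδ2 : δ ^ 2 = 2 * r ^ 2 / n := by
    rw [hδdef, mul_pow, div_pow, Real.sq_sqrt (by norm_num), Real.sq_sqrt hnR.le]
    ring
  have hδ1 : 2 * δ ≤ 1 := by
    have hratio : r / √n ≤ 1 / 10 := by
      rw [div_le_iff₀ hsn]
      linarith
    have : √(2 : ℝ) ≤ 2 := Real.sqrt_le_iff.2 (by norm_num)
    have : δ ≤ 2 * (1 / 10) := mul_le_mul this hratio (by positivity) (by norm_num)
    linarith
  calc μ {x | √(trace ((x - 1)ᵀ * (x - 1))) < r}
      ≤ μ (⋃ I ∈ Finset.powersetCard k (Finset.univ : Finset (Fin n)), columnsNear δ I) := by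
        refine measure_mono fun x hx => ?_
        obtain ⟨I, hI, hxI⟩ := exists_columnsNear hk hn hr hδ2 hx
        exact Set.mem_iUnion₂.2 ⟨I, hI, hxI⟩
    _ ≤ ∑ I ∈ Finset.powersetCard k (Finset.univ : Finset (Fin n)), μ (columnsNear δ I) :=
        measure_biUnion_finset_le _ _
    _ ≤ ∑ _I ∈ Finset.powersetCard k (Finset.univ : Finset (Fin n)),
          ENNReal.ofReal ((2 * δ) ^ k ^ 2) := by
        refine Finset.sum_le_sum fun I hI => ?_
        have hcard := (Finset.mem_powersetCard.1 hI).2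
        have := measure_columnsNear_le hk hμ hδ hδ1 I hcard.le
        rwa [hcard, ← pow_two] at this
    _ = ENNReal.ofReal (n.choose k * (2 * δ) ^ k ^ 2) := by
        rw [Finset.sum_const, Finset.card_powersetCard, Finset.card_univ, Fintype.card_fin,
          nsmul_eq_mul, ENNReal.ofReal_mul (by positivity), ENNReal.ofReal_natCast]
    _ ≤ _ := by
        refine ENNReal.ofReal_le_ofReal ?_
        rw [hδdef, mul_assoc 2]
        gcongr
        exact_mod_cast Nat.choose_le_two_pow n k

theorem two_pow_mul_le_rpow {n : ℕ} (hn : 10 ≤ n) {s : ℝ} (hs : 0 < s) (hs1 : s < 1 / 10) :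
    2 ^ n * (2 * √2 * s) ^ (n / 2) ^ 2 ≤ (4 * s) ^ ((1 / 5 : ℝ) * (n : ℝ) ^ 2) := by
  have hn' : (10 : ℝ) ≤ n := by exact_mod_cast hn
  have hsqrt : √(2 : ℝ) ≤ 2 := Real.sqrt_le_iff.2 (by norm_num)
  have hb0 : 0 < 2 * √2 * s := by positivity
  have hb1 : 2 * √2 * s ≤ 1 := by nlinarith [Real.sqrt_nonneg (2 : ℝ)]
  have hk : (1 / 5 : ℝ) * (n : ℝ) ^ 2 ≤ (((n / 2) ^ 2 : ℕ) : ℝ) := by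
    have : n ≤ 2 * (n / 2) + 1 := by omega
    have hR : (n : ℝ) ≤ 2 * ((n / 2 : ℕ) : ℝ) + 1 := by exact_mod_cast this
    rw [Nat.cast_pow]
    nlinarith
  have htwo : (2 : ℝ) ^ n ≤ √2 ^ ((1 / 5 : ℝ) * (n : ℝ) ^ 2) := by
    rw [Real.sqrt_eq_rpow, ← Real.rpow_mul (by norm_num), ← Real.rpow_natCast]
    refine Real.rpow_le_rpow_of_exponent_le (by norm_num) ?_
    nlinarith
  calc 2 ^ n * (2 * √2 * s) ^ (n / 2) ^ 2
      ≤ √2 ^ ((1 / 5 : ℝ) * (n : ℝ) ^ 2) * (2 * √2 * s) ^ ((1 / 5 : ℝ) * (n : ℝ) ^ 2) := by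
        refine mul_le_mul htwo ?_ (by positivity) (by positivity)
        rw [← Real.rpow_natCast]
        exact Real.rpow_le_rpow_of_exponent_ge hb0 hb1 hk
    _ = _ := by
        rw [← Real.mul_rpow (by positivity) hb0.le]
        congr 1
        linear_combination 2 * s * Real.mul_self_sqrt (show (0 : ℝ) ≤ 2 by norm_num)

/-- **Claim 1.** There are constants `φ, ψ > 0` such that for all `n ≥ 10` and
`0 < r < √n/10`, the Haar probability measure of the Hilbert–Schmidt ball of radius `r`
around the identity in `SO(n)` is at most `(e^φ r/√n)^{ψ n²}`. -/
theorem haar_measure_small_ball_bound :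
    ∃ φ : ℝ, 0 < φ ∧ ∃ ψ : ℝ, 0 < ψ ∧
      ∀ n : ℕ, 10 ≤ n → ∀ r : ℝ, 0 < r → r < Real.sqrt n / 10 →
        haarLike (SO n)
            {x : Matrix (Fin n) (Fin n) ℝ |
              Real.sqrt (Matrix.trace ((x - 1)ᵀ * (x - 1))) < r} ≤
          ENNReal.ofReal ((Real.exp φ * r / Real.sqrt n) ^ (ψ * (n : ℝ) ^ 2)) := by
  refine ⟨Real.log 4, Real.log_pos (by norm_num), 1 / 5, by norm_num, fun n hn r hr hrn => ?_⟩
  have hsn : 0 < √(n : ℝ) := Real.sqrt_pos.2 (by exact_mod_cast (by omega : 0 < n))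
  by_cases h : ∃ μ, IsHaarLike (SO n) μ
  · have hhaar : haarLike (SO n) = h.choose := dif_pos h
    obtain ⟨hprob, -, hinv⟩ := h.choose_spec
    rw [hhaar, Real.exp_log (by norm_num), mul_div_assoc]
    refine (measure_ball_le (k := n / 2) (by omega) (by omega) (fun a ha => (hinv a ha).1)
      hr hrn).trans (ENNReal.ofReal_le_ofReal (two_pow_mul_le_rpow hn (by positivity) ?_))
    rw [div_lt_iff₀ hsn]
    linarith
  · have hzero : haarLike (SO n) = 0 := dif_neg h
    simp [hzero]

end
end

section
/- For every integer n ≥ 2 and all a, b ∈ SO(n), the intrinsic metric satisfies D(a,b) ≤ π√n; that is, the diameter of SO(n) in the metric D is at most π√n. -/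
open MeasureTheory ENNReal Filter Topology Matrix

noncomputable section

/-- A skew-symmetric matrix `J` respecting the level sets of `θ` which squares to `-1` off the zero
set of `θ` and vanishes on it: the generator directions of a rotation with angles `θ`. -/
structure IsRotationStructure {m : Type*} [Fintype m] [DecidableEq m] (θ : m → ℝ)
    (J : Matrix m m ℝ) : Prop where
  transpose_eq : Jᵀ = -J
  angle_eq : ∀ i j, J i j ≠ 0 → θ i = θ j
  mul_self : J * J = -diagonal (fun i => if θ i = 0 then 0 else 1)

/-- The one-parameter group of rotations with angles `θ` and directions `J`. -/
def rotationPath {m : Type*} [Fintype m] [DecidableEq m] (θ : m → ℝ) (J : Matrix m m ℝ) (t : ℝ) :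
    Matrix m m ℝ :=
  diagonal (fun i => Real.cos (t * θ i)) + diagonal (fun i => Real.sin (t * θ i)) * J

section Rotation

variable {m : Type*} [Fintype m] [DecidableEq m] {θ : m → ℝ} {J : Matrix m m ℝ}

lemma diagonal_comp_mul_comm (h : ∀ i j, J i j ≠ 0 → θ i = θ j) (f : ℝ → ℝ) :
    diagonal (fun i => f (θ i)) * J = J * diagonal (fun i => f (θ i)) := by
  ext i j
  rw [diagonal_mul, mul_diagonal]
  by_cases hij : J i j = 0
  · simp [hij]
  · rw [h i j hij, mul_comm]

lemma IsRotationStructure.mul_transpose_self (h : IsRotationStructure θ J) (f g : ℝ → ℝ) :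
    (diagonal (fun i => f (θ i)) + diagonal (fun i => g (θ i)) * J) *
      (diagonal (fun i => f (θ i)) + diagonal (fun i => g (θ i)) * J)ᵀ =
      diagonal (fun i => f (θ i) ^ 2 + if θ i = 0 then 0 else g (θ i) ^ 2) := by
  have hf := diagonal_comp_mul_comm h.angle_eq f
  have hg := diagonal_comp_mul_comm h.angle_eq g
  have hfg : diagonal (fun i => f (θ i)) * diagonal (fun i => g (θ i)) =
      diagonal (fun i => g (θ i)) * diagonal (fun i => f (θ i)) := by
    simp [mul_comm]
  have hE : diagonal (fun i => f (θ i) ^ 2 + if θ i = 0 then 0 else g (θ i) ^ 2) =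
      diagonal (fun i => f (θ i)) * diagonal (fun i => f (θ i)) -
        diagonal (fun i => g (θ i)) * diagonal (fun i => g (θ i)) * (J * J) := by
    rw [h.mul_self]
    simp only [diagonal_mul_diagonal, mul_neg, sub_neg_eq_add, diagonal_add]
    congr 1
    ext i
    split_ifs <;> ring
  rw [hE, transpose_add, transpose_mul, diagonal_transpose, diagonal_transpose, h.transpose_eq]
  set F := diagonal (fun i => f (θ i))
  set G := diagonal (fun i => g (θ i))
  calc (F + G * J) * (F + -J * G)
      = F * F - F * (J * G) + G * (J * F) - G * J * (J * G) := by noncomm_ring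
    _ = F * F - F * G * J + G * F * J - G * (J * G) * J := by
        rw [← hg, ← hf, ← Matrix.mul_assoc F, ← Matrix.mul_assoc G, ← Matrix.mul_assoc (G * J),
          Matrix.mul_assoc G J G, hg]
    _ = F * F - G * G * (J * J) := by rw [← hg, hfg]; noncomm_ring

lemma rotationPath_zero : rotationPath θ J 0 = 1 := by
  simp [rotationPath]

lemma continuous_rotationPath : Continuous (rotationPath θ J) := by
  unfold rotationPath
  fun_prop

lemma IsRotationStructure.rotationPath_mul_transpose (h : IsRotationStructure θ J) (t : ℝ) :
    rotationPath θ J t * (rotationPath θ J t)ᵀ = 1 := by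
  rw [rotationPath, h.mul_transpose_self (fun x => Real.cos (t * x)) (fun x => Real.sin (t * x)),
    ← diagonal_one]
  congr 1
  ext i
  split_ifs with hi
  · simp [hi]
  · simp

lemma IsRotationStructure.det_rotationPath (h : IsRotationStructure θ J) (t : ℝ) :
    (rotationPath θ J t).det = 1 := by
  have hsq : ∀ s, (rotationPath θ J s).det ^ 2 = 1 := fun s => by
    have := congrArg det (h.rotationPath_mul_transpose s)
    rwa [det_mul, det_transpose, det_one, ← sq] at this
  have hcont : Continuous fun s => (rotationPath θ J s).det :=
    continuous_rotationPath.matrix_det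
  rcases isPreconnected_univ.eq_one_or_eq_neg_one_of_sq_eq (S := (Set.univ : Set ℝ))
    hcont.continuousOn (fun s _ => hsq s) with h1 | h1
  · exact h1 (Set.mem_univ t)
  · have := h1 (Set.mem_univ 0)
    norm_num [rotationPath_zero] at this

lemma IsRotationStructure.trace_rotationPath_sub_le (h : IsRotationStructure θ J) (s t : ℝ) :
    trace ((rotationPath θ J s - rotationPath θ J t)ᵀ *
      (rotationPath θ J s - rotationPath θ J t)) ≤ ∑ i, ((t - s) * θ i) ^ 2 := by
  have hd : rotationPath θ J s - rotationPath θ J t =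
      diagonal (fun i => Real.cos (s * θ i) - Real.cos (t * θ i)) +
        diagonal (fun i => Real.sin (s * θ i) - Real.sin (t * θ i)) * J := by
    rw [rotationPath, rotationPath, ← diagonal_sub, ← diagonal_sub]
    noncomm_ring
  rw [trace_mul_comm, hd, h.mul_transpose_self (fun x => Real.cos (s * x) - Real.cos (t * x))
    (fun x => Real.sin (s * x) - Real.sin (t * x)), trace_diagonal]
  refine Finset.sum_le_sum fun i _ => ?_
  have hc := Real.one_sub_sq_div_two_le_cos (x := (t - s) * θ i)
  rw [sub_mul, Real.cos_sub] at hc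
  rw [sub_mul]
  have h1 := Real.sin_sq_add_cos_sq (s * θ i)
  have h2 := Real.sin_sq_add_cos_sq (t * θ i)
  split_ifs with hi
  · simp [hi]
  · nlinarith

/-- On a set of even cardinality there is an orthogonal complex structure. -/
lemma exists_skew_mul_self_of_even (p : m → Prop) [DecidablePred p]
    (hp : Even (Fintype.card {i // p i})) :
    ∃ J : Matrix m m ℝ, Jᵀ = -J ∧ (∀ i j, J i j ≠ 0 → p i ∧ p j) ∧
      J * J = -diagonal (fun i => if p i then 1 else 0) := by
  obtain ⟨k, hk⟩ := hp
  have e : {i // p i} ≃ Fin k ⊕ Fin k := Fintype.equivOfCardEq (by simp [hk])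
  let P : Matrix (Fin k ⊕ Fin k) m ℝ := Matrix.of fun x i => if (e.symm x : m) = i then 1 else 0
  have hP : P * Pᵀ = 1 := by
    ext x y
    simp [P, mul_apply, one_apply, Subtype.coe_inj, @eq_comm _ x y]
  have hP' : Pᵀ * P = diagonal (fun i => if p i then 1 else 0) := by
    ext i j
    rw [mul_apply, ← e.sum_comp]
    simp only [P, transpose_apply, of_apply, e.symm_apply_apply, diagonal_apply]
    by_cases hi : p i
    · rw [Finset.sum_eq_single ⟨i, hi⟩]
      · simp [hi]
      · intro b _ hb
        have : (b : m) ≠ i := fun hbi => hb (Subtype.ext hbi)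
        simp [this]
      · simp
    · rw [Finset.sum_eq_zero]
      · simp [hi]
      · intro b _
        have : (b : m) ≠ i := fun hbi => hi (hbi ▸ b.2)
        simp [this]
  have hz : ∀ x i, ¬ p i → P x i = 0 := fun x i hi => by
    have : (e.symm x : m) ≠ i := fun hx => hi (hx ▸ (e.symm x).2)
    simp [P, this]
  refine ⟨Pᵀ * Matrix.J (Fin k) ℝ * P, ?_, fun i j hij => ?_, ?_⟩
  · simp [transpose_mul, Matrix.J_transpose, Matrix.mul_assoc]
  · contrapose! hij
    by_cases hi : p i
    · rw [mul_apply]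
      exact Finset.sum_eq_zero fun x _ => by rw [hz x j (hij hi), mul_zero]
    · rw [Matrix.mul_assoc, mul_apply]
      exact Finset.sum_eq_zero fun x _ => by rw [transpose_apply, hz x i hi, zero_mul]
  · calc Pᵀ * Matrix.J (Fin k) ℝ * P * (Pᵀ * Matrix.J (Fin k) ℝ * P)
        = Pᵀ * (Matrix.J (Fin k) ℝ * (P * Pᵀ) * Matrix.J (Fin k) ℝ) * P := by
          simp only [Matrix.mul_assoc]
      _ = _ := by
          rw [hP, Matrix.mul_one, Matrix.J_squared, Matrix.mul_neg, Matrix.neg_mul, Matrix.mul_one,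
            hP']

/-- A rotation whose symmetric part is diagonal lies on a one-parameter group of rotations with
angles in `[0, π]`. -/
lemma exists_rotationPath_one_eq {d : m → ℝ} {K : Matrix m m ℝ} (hK : Kᵀ = -K)
    (hcomm : K * diagonal d = diagonal d * K) (hsq : K * K = diagonal (fun i => d i ^ 2 - 1))
    (hdet : (diagonal d + K).det = 1) :
    ∃ (θ : m → ℝ) (J : Matrix m m ℝ), IsRotationStructure θ J ∧
      (∀ i, 0 ≤ θ i ∧ θ i ≤ Real.pi) ∧ rotationPath θ J 1 = diagonal d + K := by
  have hskew : ∀ i j, K j i = -K i j := fun i j => congrFun (congrFun hK i) j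
  have hrow : ∀ i, ∑ j, K i j ^ 2 = 1 - d i ^ 2 := fun i => by
    have := congrFun (congrFun hsq i) i
    rw [mul_apply, diagonal_apply_eq] at this
    rw [← neg_sub, ← this, ← Finset.sum_neg_distrib]
    exact Finset.sum_congr rfl fun j _ => by rw [hskew i j]; ring
  have hd : ∀ i, d i ^ 2 ≤ 1 := fun i => by
    have := Finset.sum_nonneg fun j (_ : j ∈ Finset.univ) => sq_nonneg (K i j)
    rw [hrow] at this
    linarith
  have hd' : ∀ i, -1 ≤ d i ∧ d i ≤ 1 := fun i => abs_le.mp ((sq_le_one_iff_abs_le_one _).mp (hd i))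
  have hlevel : ∀ i j, K i j ≠ 0 → d i = d j := fun i j hij => by
    have := congrFun (congrFun hcomm i) j
    rw [mul_diagonal, diagonal_mul, mul_comm] at this
    exact (mul_right_cancel₀ hij this).symm
  have hzero : ∀ i j, d i ^ 2 = 1 → K i j = 0 := fun i j hi => by
    have h0 := hrow i
    rw [hi, sub_self, Finset.sum_eq_zero_iff_of_nonneg fun _ _ => sq_nonneg _] at h0
    exact pow_eq_zero_iff two_ne_zero |>.mp (h0 j (Finset.mem_univ j))
  let σ : ℝ → ℝ := fun x => √(1 - x ^ 2)
  have hσ0 : ∀ i, σ (d i) = 0 ↔ d i ^ 2 = 1 := fun i => by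
    simp only [σ]
    rw [Real.sqrt_eq_zero (by linarith [hd i])]
    constructor <;> intro h <;> linarith
  have hKσ : ∀ i j, σ (d i) * ((σ (d i))⁻¹ * K i j) = K i j := fun i j => by
    by_cases h : σ (d i) = 0
    · rw [hzero i j ((hσ0 i).mp h)]; simp
    · rw [mul_inv_cancel_left₀ h]
  let J₀ : Matrix m m ℝ := diagonal (fun i => (σ (d i))⁻¹) * K
  have hJ₀ : ∀ i j, J₀ i j = (σ (d i))⁻¹ * K i j := fun i j => diagonal_mul _ _ _ _
  have hJ₀K : ∀ i j, J₀ i j ≠ 0 → K i j ≠ 0 := fun i j h hk => h (by rw [hJ₀, hk, mul_zero])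
  have hJ₀comm : J₀ = K * diagonal (fun i => (σ (d i))⁻¹) :=
    diagonal_comp_mul_comm hlevel fun x => (σ x)⁻¹
  have hJ₀skew : J₀ᵀ = -J₀ := by
    rw [hJ₀comm, transpose_mul, diagonal_transpose, hK, Matrix.mul_neg, ← hJ₀comm]
  have hJ₀sq : J₀ * J₀ = -diagonal (fun i => if d i ^ 2 = 1 then 0 else 1) := by
    calc J₀ * J₀ = diagonal (fun i => (σ (d i))⁻¹) * (K * K) * diagonal (fun i => (σ (d i))⁻¹) := by
          nth_rewrite 2 [hJ₀comm]
          simp only [J₀, Matrix.mul_assoc]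
      _ = _ := by
          rw [hsq, diagonal_mul_diagonal, diagonal_mul_diagonal, diagonal_neg]
          congr 1
          ext i
          split_ifs with hi
          · simp [hi]
          · have h1 := mt (hσ0 i).mp hi
            have h2 : σ (d i) ^ 2 = 1 - d i ^ 2 := Real.sq_sqrt (by linarith [hd i])
            field_simp
            linarith
  -- The rotation obtained by replacing the eigenvalue `-1` with `1`.
  let θ₀ : m → ℝ := fun i => if d i = -1 then 0 else Real.arccos (d i)
  have hθ₀ : ∀ i, θ₀ i = 0 ↔ d i ^ 2 = 1 := fun i => by
    simp only [θ₀, sq_eq_one_iff]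
    split_ifs with hi
    · simp [hi]
    · rw [Real.arccos_eq_zero]
      simp only [hi, or_false]
      exact ⟨fun h => le_antisymm (hd' i).2 h, fun h => h.ge⟩
  have hrot₀ : IsRotationStructure θ₀ J₀ :=
    ⟨hJ₀skew, fun i j hij => by simp only [θ₀, hlevel i j (hJ₀K i j hij)], by
      rw [hJ₀sq]; simp only [hθ₀]⟩
  have heven : Even (Fintype.card {i // d i = -1}) := by
    have hfac : diagonal d + K =
        diagonal (fun i => if d i = -1 then -1 else 1) * rotationPath θ₀ J₀ 1 := by
      ext i j
      rw [diagonal_mul, rotationPath, Matrix.add_apply, Matrix.add_apply, diagonal_mul, hJ₀, diagonal_apply,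
        diagonal_apply]
      by_cases hi : d i = -1
      · simp [hi, hzero i j (by rw [hi]; norm_num), θ₀]
      · simp only [hi, θ₀, if_false, one_mul, Real.cos_arccos (hd' i).1 (hd' i).2,
          Real.sin_arccos]
        rw [hKσ]
    rw [hfac, det_mul, hrot₀.det_rotationPath, mul_one, det_diagonal, Finset.prod_ite,
      Finset.prod_const_one, mul_one, Finset.prod_const, ← Fintype.card_subtype] at hdet
    by_contra hodd
    rw [(Nat.not_even_iff_odd.mp hodd).neg_one_pow] at hdet
    norm_num at hdet
  obtain ⟨J₁, hJ₁skew, hJ₁supp, hJ₁sq⟩ := exists_skew_mul_self_of_even (fun i => d i = -1) heven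
  have h01 : J₀ * J₁ = 0 := by
    ext i j
    rw [mul_apply]
    refine Finset.sum_eq_zero fun k _ => ?_
    by_contra h
    have h1 := hJ₁supp k j (right_ne_zero_of_mul h)
    have h2 := hJ₀K i k (left_ne_zero_of_mul h)
    exact h2 (hzero i k (by rw [hlevel i k h2, h1.1]; norm_num))
  have h10 : J₁ * J₀ = 0 := by
    have := congrArg transpose h01
    rwa [transpose_mul, hJ₀skew, hJ₁skew, neg_mul_neg, transpose_zero] at this
  refine ⟨fun i => Real.arccos (d i), J₀ + J₁, ⟨?_, fun i j hij => ?_, ?_⟩,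
    fun i => ⟨Real.arccos_nonneg _, Real.arccos_le_pi _⟩, ?_⟩
  · rw [transpose_add, hJ₀skew, hJ₁skew, neg_add]
  · congr 1
    by_cases h0 : J₀ i j = 0
    · have h1 := hJ₁supp i j (by rwa [Matrix.add_apply, h0, zero_add] at hij)
      rw [h1.1, h1.2]
    · exact hlevel i j (hJ₀K i j h0)
  · rw [Matrix.add_mul, Matrix.mul_add, Matrix.mul_add, h01, h10, hJ₀sq, hJ₁sq, add_zero, zero_add,
      ← neg_add, diagonal_add]
    congr 2
    ext i
    have h1 : 1 ≤ d i ↔ d i = 1 := ⟨fun h => le_antisymm (hd' i).2 h, fun h => h.ge⟩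
    simp only [Real.arccos_eq_zero, sq_eq_one_iff, h1]
    by_cases ha : d i = 1
    · norm_num [ha]
    · simp only [ha, false_or, if_false]
      split_ifs <;> norm_num
  · ext i j
    rw [rotationPath, Matrix.add_apply, Matrix.add_apply, diagonal_mul, Matrix.add_apply, hJ₀]
    simp only [one_mul, Real.cos_arccos (hd' _).1 (hd' _).2, Real.sin_arccos]
    rw [mul_add, hKσ]
    by_cases h : J₁ i j = 0
    · rw [h, mul_zero, add_zero]
    · rw [(hJ₁supp i j h).1]
      norm_num

end Rotation

/-- The length of a curve which is `C`-Lipschitz on the line is at most `C`. -/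
lemma pathLengthE_le_of_dist_le {X : Type*} {d : X → X → ℝ≥0∞} {γ : ℝ → X} {C : ℝ} (hC : 0 ≤ C)
    (h : ∀ s t, s ≤ t → d (γ s) (γ t) ≤ ENNReal.ofReal (C * (t - s))) :
    pathLengthE d γ ≤ ENNReal.ofReal C := by
  refine iSup_le fun k => iSup_le fun t => iSup_le fun ht => iSup_le fun h0 => iSup_le fun h1 => ?_
  have hstep : ∀ i : Fin k, t i.castSucc ≤ t i.succ := fun i => ht i.castSucc_lt_succ.le
  have htel : ∀ (k : ℕ) (t : Fin (k + 1) → ℝ),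
      ∑ i : Fin k, (t i.succ - t i.castSucc) = t (Fin.last k) - t 0 := by
    intro k t
    rw [Finset.sum_sub_distrib, sub_eq_sub_iff_add_eq_add, add_comm, ← Fin.sum_univ_succ,
      Fin.sum_univ_castSucc, add_comm]
  calc ∑ i : Fin k, d (γ (t i.castSucc)) (γ (t i.succ))
      ≤ ∑ i : Fin k, ENNReal.ofReal (C * (t i.succ - t i.castSucc)) :=
        Finset.sum_le_sum fun i _ => h _ _ (hstep i)
    _ = ENNReal.ofReal C := by
        rw [← ENNReal.ofReal_sum_of_nonneg fun i _ => mul_nonneg hC (sub_nonneg.mpr (hstep i)),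
          ← Finset.mul_sum, htel, h0, h1, sub_zero, mul_one]

lemma hsDist_conj {n : ℕ} {u v : Matrix (Fin n) (Fin n) ℝ} (hu : uᵀ * u = 1) (hv : v * vᵀ = 1)
    (x y : Matrix (Fin n) (Fin n) ℝ) : hsDist (u * x * v) (u * y * v) = hsDist x y := by
  have : trace ((u * x * v - u * y * v)ᵀ * (u * x * v - u * y * v)) =
      trace ((x - y)ᵀ * (x - y)) := by
    rw [← Matrix.sub_mul, ← Matrix.mul_sub, trace_mul_comm, transpose_mul, Matrix.mul_assoc,
      ← Matrix.mul_assoc v, hv, Matrix.one_mul, transpose_mul, trace_mul_comm, Matrix.mul_assoc,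
      ← Matrix.mul_assoc uᵀ, hu, Matrix.one_mul]
  rw [hsDist, hsDist, this]

/-- For every `n ≥ 2` and all `a, b ∈ SO(n)`, the intrinsic metric induced by the
Hilbert–Schmidt norm satisfies `D(a,b) ≤ π√n`; that is, the diameter of `SO(n)` in the
metric `D` is at most `π√n`. -/
theorem diameter_SO_le (n : ℕ) (hn : 2 ≤ n)
    (a b : Matrix (Fin n) (Fin n) ℝ) (ha : a ∈ SO n) (hb : b ∈ SO n) :
    DSO n a b ≤ ENNReal.ofReal (Real.pi * Real.sqrt n) := by
  obtain ⟨ha, hda⟩ := ha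
  obtain ⟨hb, hdb⟩ := hb
  have ha' : aᵀ * a = 1 := mul_eq_one_comm.mp ha
  have hb' : bᵀ * b = 1 := mul_eq_one_comm.mp hb
  have hA : ((1 / 2 : ℝ) • (aᵀ * b + bᵀ * a)).IsHermitian := by
    rw [IsHermitian, conjTranspose_eq_transpose_of_trivial, transpose_smul, transpose_add,
      transpose_mul, transpose_mul, transpose_transpose, transpose_transpose, add_comm]
  obtain ⟨U, d, hU, hUd⟩ : ∃ (U : Matrix (Fin n) (Fin n) ℝ) (d : Fin n → ℝ), Uᵀ * U = 1 ∧
      (1 / 2 : ℝ) • (aᵀ * b + bᵀ * a) = U * diagonal d * Uᵀ :=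
    ⟨hA.eigenvectorUnitary, hA.eigenvalues, Unitary.coe_star_mul_self hA.eigenvectorUnitary,
      hA.spectral_theorem⟩
  have hU' : U * Uᵀ = 1 := mul_eq_one_comm.mp hU
  have hdiag : diagonal d = Uᵀ * ((1 / 2 : ℝ) • (aᵀ * b + bᵀ * a)) * U := by
    rw [hUd]
    simp only [Matrix.mul_assoc]
    rw [hU, Matrix.mul_one, ← Matrix.mul_assoc, hU, Matrix.one_mul]
  -- The rotation `c` is `a⁻¹ b` in an orthonormal basis diagonalizing its symmetric part.
  set c := Uᵀ * (aᵀ * b) * U with hc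
  have hct : cᵀ = Uᵀ * (bᵀ * a) * U := by
    simp [hc, transpose_mul, Matrix.mul_assoc]
  have hcc : c * cᵀ = 1 := by
    calc c * cᵀ = Uᵀ * (aᵀ * (b * (U * Uᵀ) * bᵀ) * a) * U := by
          rw [hct, hc]
          simp only [Matrix.mul_assoc]
      _ = 1 := by simp [hU', hb, ha', hU]
  have hcc' : cᵀ * c = 1 := mul_eq_one_comm.mp hcc
  have hsum : diagonal d = (1 / 2 : ℝ) • (c + cᵀ) := by
    rw [hdiag, hct, hc, Matrix.mul_smul, Matrix.smul_mul, Matrix.mul_add, Matrix.add_mul]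
  have hdecomp : diagonal d + (1 / 2 : ℝ) • (c - cᵀ) = c := by
    rw [hsum]
    module
  have hdetc : c.det = 1 := by
    have h := congrArg det hU
    rw [det_mul, det_one] at h
    rw [hc, det_mul, det_mul, det_mul, det_transpose a, hda, hdb, mul_one, mul_one, h]
  obtain ⟨θ, J, hJ, hθ, hend⟩ := exists_rotationPath_one_eq (d := d) (K := (1 / 2 : ℝ) • (c - cᵀ))
    (by rw [transpose_smul, transpose_sub, transpose_transpose]; module)
    (by
      rw [hsum]
      simp only [Matrix.smul_mul, Matrix.mul_smul, Matrix.sub_mul, Matrix.mul_add, Matrix.add_mul,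
        Matrix.mul_sub, hcc, hcc']
      module)
    (by
      have h : diagonal (fun i => d i ^ 2 - 1) = diagonal d * diagonal d - 1 := by
        rw [diagonal_mul_diagonal, ← diagonal_one, diagonal_sub]
        simp only [sq]
      rw [h, hsum]
      simp only [Matrix.smul_mul, Matrix.mul_smul, Matrix.sub_mul, Matrix.mul_add, Matrix.add_mul,
        Matrix.mul_sub, hcc, hcc']
      module)
    (by rw [hdecomp, hdetc])
  rw [hdecomp] at hend
  have hu : (a * U)ᵀ * (a * U) = 1 := by
    rw [transpose_mul, Matrix.mul_assoc, ← Matrix.mul_assoc aᵀ, ha', Matrix.one_mul, hU]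
  refine iInf₂_le_of_le (fun t => a * U * rotationPath θ J t * Uᵀ)
    (((continuous_const.mul continuous_rotationPath).mul continuous_const).continuousOn) <|
    iInf₂_le_of_le (fun t _ => ⟨?_, ?_⟩) ?_ <| iInf_le_of_le ?_ <|
    pathLengthE_le_of_dist_le (by positivity) fun s t hst => ?_
  · calc a * U * rotationPath θ J t * Uᵀ * (a * U * rotationPath θ J t * Uᵀ)ᵀ
        = a * (U * (rotationPath θ J t * (Uᵀ * U) * (rotationPath θ J t)ᵀ) * Uᵀ) * aᵀ := by
          simp only [transpose_mul, transpose_transpose, Matrix.mul_assoc]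
      _ = 1 := by
          rw [hU, Matrix.mul_one, hJ.rotationPath_mul_transpose, Matrix.mul_one, hU',
            Matrix.mul_one, ha]
  · have h := congrArg det hU
    rw [det_mul, det_one, mul_comm] at h
    rw [det_mul, det_mul, det_mul, hJ.det_rotationPath, hda, one_mul, mul_one, h]
  · simp [rotationPath_zero, Matrix.mul_assoc, hU']
  · calc a * U * rotationPath θ J 1 * Uᵀ = a * (U * Uᵀ) * aᵀ * b * (U * Uᵀ) := by
          simp only [hend, hc, Matrix.mul_assoc]
      _ = b := by rw [hU', Matrix.mul_one, Matrix.mul_one, ha, Matrix.one_mul]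
  · rw [hsDist_conj hu (by rwa [transpose_transpose]), hsDist]
    refine ENNReal.ofReal_le_ofReal (Real.sqrt_le_iff.mpr
      ⟨mul_nonneg (by positivity) (sub_nonneg.mpr hst), ?_⟩)
    refine (hJ.trace_rotationPath_sub_le s t).trans ?_
    calc ∑ i, ((t - s) * θ i) ^ 2 ≤ ∑ _i : Fin n, ((t - s) * Real.pi) ^ 2 := by
          refine Finset.sum_le_sum fun i _ => ?_
          have := sub_nonneg.mpr hst
          have := (hθ i).1
          have := (hθ i).2
          gcongr
      _ = (Real.pi * √n * (t - s)) ^ 2 := by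
          rw [Finset.sum_const, Finset.card_univ, Fintype.card_fin, nsmul_eq_mul, mul_pow, mul_pow,
            mul_pow, Real.sq_sqrt (Nat.cast_nonneg n)]
          ring

end
end
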